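/- arXiv:1709.08651 — 2 statements merged into one kernel-verified Lean document; each statement's English description precedes it below -/
import Mathlib

section
/- Suppose ξ = 2πω with ω ∈ (0, 1/2) irrational. Fix an integer ℓ ≥ 0 and δ ≠ 0, assume D(ℓ) > 0, and let A < B with −D(ℓ) ≤ A and B ≤ D(ℓ). Then, for every choice, for each series length n, of a unit eigenvector u_n of H(δ)H(δ)ᵀ corresponding to its largest eigenvalue, (1/N)·Σ_{n=ℓ+1}^{N+ℓ} 1_{(A,B)}(r_{n−1−ℓ}(n)/δ) → ∫_A^B du/(π·√(D(ℓ)² − u²)) as N → ∞, where r_{n−1−ℓ}(n) is the reconstruction error at index n−1−ℓ for the series of length n. -/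
open Filter Matrix

/-- Hankelization (diagonal averaging): the `j`-th value is the average of the
entries `Y i k` with `i + k = j`. -/
noncomputable def hankelize {L K : ℕ} (Y : Matrix (Fin L) (Fin K) ℝ) (j : ℕ) : ℝ :=
  (∑ i : Fin L, ∑ k : Fin K, if (i : ℕ) + (k : ℕ) = j then Y i k else 0) /
  (∑ i : Fin L, ∑ k : Fin K, if (i : ℕ) + (k : ℕ) = j then (1 : ℝ) else 0)

/-- The `L × K` Hankel (trajectory) matrix of a series `x`. -/
noncomputable def hankelOf (x : ℕ → ℝ) (L K : ℕ) : Matrix (Fin L) (Fin K) ℝ :=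
  Matrix.of fun i k => x ((i : ℕ) + (k : ℕ))

/-- Squared Euclidean norm of a vector. -/
noncomputable def normSq {M : ℕ} (w : Fin M → ℝ) : ℝ := ∑ i, w i ^ 2

/-- `u` is a unit eigenvector of `A` corresponding to its largest eigenvalue. -/
def IsTopEigenvector {L : ℕ} (A : Matrix (Fin L) (Fin L) ℝ) (u : Fin L → ℝ) : Prop :=
  normSq u = 1 ∧ ∃ μ : ℝ, A.mulVec u = μ • u ∧
    ∀ (ν : ℝ) (v : Fin L → ℝ), v ≠ 0 → A.mulVec v = ν • v → ν ≤ μ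

/-- The exponential signal `x_n = a^n`. -/
noncomputable def expSignal (a : ℝ) : ℕ → ℝ := fun n => a ^ n

/-- The harmonic noise `e_n = cos (ξ n + φ)`. -/
noncomputable def cosNoise (ξ φ : ℝ) : ℕ → ℝ := fun n => Real.cos (ξ * (n : ℝ) + φ)

/-- The vector `W_M = (1, a, …, a^{M-1})ᵀ`. -/
noncomputable def Wvec (a : ℝ) (M : ℕ) : Fin M → ℝ := fun i => a ^ (i : ℕ)

/-- `ρ_j = (𝒮(P₀ E Hᵀ S₀ H))_j + (𝒮(P₀⊥ E))_j`. -/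
noncomputable def rho (a ξ φ : ℝ) (L K : ℕ) (j : ℕ) : ℝ :=
  let H := hankelOf (expSignal a) L K
  let E := hankelOf (cosNoise ξ φ) L K
  let P0perp : Matrix (Fin L) (Fin L) ℝ :=
    (normSq (Wvec a L))⁻¹ • Matrix.vecMulVec (Wvec a L) (Wvec a L)
  let P0 : Matrix (Fin L) (Fin L) ℝ := 1 - P0perp
  let S0 : Matrix (Fin L) (Fin L) ℝ :=
    ((normSq (Wvec a L)) ^ 2 * normSq (Wvec a K))⁻¹ • Matrix.vecMulVec (Wvec a L) (Wvec a L)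
  hankelize (P0 * E * Hᵀ * S0 * H) j + hankelize (P0perp * E) j

/-- The matrix `H(δ)H(δ)ᵀ` for the perturbed series `a^n + δ cos(ξ n + φ)`. -/
noncomputable def HdeltaSq (a ξ φ δ : ℝ) (L K : ℕ) : Matrix (Fin L) (Fin L) ℝ :=
  let Hδ := hankelOf (expSignal a) L K + δ • hankelOf (cosNoise ξ φ) L K
  Hδ * Hδᵀ

/-- The SSA reconstruction error `r_j = (𝒮(u uᵀ H(δ)))_j - a^j`. -/
noncomputable def recErr (a ξ φ δ : ℝ) (L K : ℕ) (u : Fin L → ℝ) (j : ℕ) : ℝ :=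
  hankelize (Matrix.vecMulVec u u *
    (hankelOf (expSignal a) L K + δ • hankelOf (cosNoise ξ φ) L K)) j - a ^ j

/-- `G(a,ξ) = (a²-1)/(a(a²+1-2a cos ξ))`. -/
noncomputable def Gfun (a ξ : ℝ) : ℝ := (a ^ 2 - 1) / (a * (a ^ 2 + 1 - 2 * a * Real.cos ξ))

/-- The coefficient `C₁(ℓ)`. -/
noncomputable def C1 (a ξ : ℝ) (ℓ : ℕ) : ℝ :=
  (2 / (1 + (ℓ : ℝ))) * (a * Real.cos ((ℓ : ℝ) * ξ) - a ^ (-(ℓ : ℤ)) * Real.cos ξ)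
  - (a ^ 2 + 1 - 2 * a * Real.cos ξ - 2 * Real.sin ξ ^ 2) * Gfun a ξ * a ^ (-(ℓ : ℤ))

/-- The coefficient `C₂(ℓ)`. -/
noncomputable def C2 (a ξ : ℝ) (ℓ : ℕ) : ℝ :=
  (2 / (1 + (ℓ : ℝ))) * (a * Real.sin ((ℓ : ℝ) * ξ) + a ^ (-(ℓ : ℤ)) * Real.sin ξ)
  - 2 * Real.sin ξ * (a - Real.cos ξ) * Gfun a ξ * a ^ (-(ℓ : ℤ))

/-- `D(ℓ) = G(a,ξ)·√(C₁(ℓ)² + C₂(ℓ)²)`. -/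
noncomputable def Dfun (a ξ : ℝ) (ℓ : ℕ) : ℝ :=
  Gfun a ξ * Real.sqrt (C1 a ξ ℓ ^ 2 + C2 a ξ ℓ ^ 2)

/-!
Write `p qᵀ` for the signal matrix `H`, which has rank one and singular value `‖p‖ ‖q‖` of order
`a ^ N`. First-order perturbation theory gives `u uᵀ H(δ) = p qᵀ + T(δE) + O(‖δE‖² / (‖p‖ ‖q‖))`,
where `T` is the orthogonal projection onto the tangent space at `p qᵀ` of the rank-one matrices.
As `‖E‖` grows at most linearly in `N`, the remainder vanishes and `r_j / δ` is asymptotically the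
`j`-th diagonal average of `T(E)`. On the last diagonals, `E` being the real part of a separable
harmonic matrix, this average is the real part of `exp (i (ξ (N - 1) + φ)) Z_N`, with `Z_N` built
from geometric sums and converging to `G (C₁ - i C₂)`, a number of modulus `D(ℓ)`. Hence the
normalized errors are `D(ℓ) cos (ξ n + β) + o(1)`. By Weyl's theorem the phases equidistribute, and
the image of the uniform measure under `θ ↦ D cos θ` is the arcsine law.
-/

open MeasureTheory
open scoped Topology

section Equidistribution

variable {T : ℝ} [Fact (0 < T)]

lemma lipschitzWith_integral_continuousMap {X : Type*} [TopologicalSpace X] [CompactSpace X]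
    [MeasurableSpace X] [OpensMeasurableSpace X] (μ : Measure X) [IsProbabilityMeasure μ] :
    LipschitzWith 1 fun F : C(X, ℂ) => ∫ x, F x ∂μ := by
  refine LipschitzWith.of_dist_le_mul fun F G => ?_
  have integrable (F : C(X, ℂ)) : Integrable F μ :=
    F.continuous.integrable_of_hasCompactSupport (.of_compactSpace F)
  rw [dist_eq_norm, dist_eq_norm, ← integral_sub (integrable F) (integrable G)]
  simpa using norm_integral_le_of_norm_le_const (μ := μ) (.of_forall (F - G).norm_coe_le_norm)

lemma tendsto_probabilityMeasure_of_forall_tendsto_integral_fourier {ι : Type*} {l : Filter ι}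
    {μ : ι → ProbabilityMeasure (AddCircle T)} {ν : ProbabilityMeasure (AddCircle T)}
    (hμ : ∀ m : ℤ, Tendsto (fun i => ∫ x, fourier m x ∂(μ i : Measure (AddCircle T))) l
      (𝓝 (∫ x, fourier m x ∂(ν : Measure (AddCircle T))))) :
    Tendsto μ l (𝓝 ν) := by
  let S : Submodule ℂ C(AddCircle T, ℂ) :=
    { carrier := {F | Tendsto (fun i => ∫ x, F x ∂(μ i : Measure (AddCircle T))) l
        (𝓝 (∫ x, F x ∂(ν : Measure (AddCircle T))))}
      zero_mem' := by simp [tendsto_const_nhds]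
      add_mem' := fun {F G} hF hG => by
        have integrable (ρ : ProbabilityMeasure (AddCircle T)) (F : C(AddCircle T, ℂ)) :
            Integrable F (ρ : Measure (AddCircle T)) :=
          F.continuous.integrable_of_hasCompactSupport (.of_compactSpace F)
        simpa [integral_add (integrable _ F) (integrable _ G)] using Tendsto.add hF hG
      smul_mem' := fun c F hF => by
        simpa [integral_const_mul] using Tendsto.const_mul c hF }
  have isClosed : IsClosed (S : Set C(AddCircle T, ℂ)) :=
    (LipschitzWith.uniformEquicontinuous _ 1 fun i =>
      lipschitzWith_integral_continuousMap (μ i : Measure (AddCircle T))).equicontinuous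
      |>.isClosed_setOfPred_tendsto (lipschitzWith_integral_continuousMap _).continuous
  have eq_top : S = ⊤ := by
    rw [eq_top_iff, ← span_fourier_closure_eq_top]
    exact Submodule.topologicalClosure_minimal _
      (Submodule.span_le.2 (Set.range_subset_iff.2 hμ)) isClosed
  rw [ProbabilityMeasure.tendsto_iff_forall_integral_rclike_tendsto ℂ]
  exact fun F => (eq_top ▸ Submodule.mem_top : F.toContinuousMap ∈ S)

/-- The uniform distribution on the first `N + 1` terms of a sequence; taking `N + 1` rather than
`N` terms makes it a probability measure for every `N`. -/
noncomputable def empiricalMeasure {X : Type*} [MeasurableSpace X] (Y : ℕ → X) (N : ℕ) :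
    ProbabilityMeasure X :=
  ⟨((N + 1 : ℕ) : ENNReal)⁻¹ • ∑ n ∈ Finset.range (N + 1), Measure.dirac (Y n), ⟨by
    simpa using ENNReal.inv_mul_cancel (a := (N : ENNReal) + 1) (by simp) (by finiteness)⟩⟩

lemma integral_empiricalMeasure {X E : Type*} [MeasurableSpace X] [NormedAddCommGroup E]
    [NormedSpace ℝ E] [CompleteSpace E] (Y : ℕ → X) (N : ℕ) {f : X → E}
    (hf : StronglyMeasurable f) :
    ∫ x, f x ∂(empiricalMeasure Y N : Measure X) =
      ((N + 1 : ℕ) : ℝ)⁻¹ • ∑ n ∈ Finset.range (N + 1), f (Y n) := by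
  rw [empiricalMeasure, ProbabilityMeasure.coe_mk, integral_smul_measure,
    integral_finsetSum_measure fun n _ => integrable_dirac' hf (by simp)]
  simp only [integral_dirac' _ _ hf, ENNReal.toReal_inv, ENNReal.toReal_natCast]

lemma map_empiricalMeasure {X Z : Type*} [MeasurableSpace X] [MeasurableSpace Z] (Y : ℕ → X)
    (N : ℕ) {g : X → Z} (hg : Measurable g) :
    (empiricalMeasure Y N).map hg.aemeasurable = empiricalMeasure (g ∘ Y) N := by
  apply Subtype.ext
  change Measure.map g (_ • _) = _ • _
  rw [Measure.map_smul, ← Measure.mapₗ_apply_of_measurable hg, map_sum]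
  simp only [Measure.mapₗ_apply_of_measurable hg, Measure.map_dirac' hg, Function.comp_apply]

lemma real_empiricalMeasure {X : Type*} [MeasurableSpace X] (Y : ℕ → X) (N : ℕ) {s : Set X}
    (hs : MeasurableSet s) :
    (empiricalMeasure Y N : Measure X).real s =
      ((N + 1 : ℕ) : ℝ)⁻¹ * ∑ n ∈ Finset.range (N + 1), s.indicator (fun _ => (1 : ℝ)) (Y n) := by
  rw [← integral_indicator_one hs, integral_empiricalMeasure Y N
    (stronglyMeasurable_one.indicator hs)]
  rfl

lemma tendsto_empiricalMeasure_of_dist_tendsto_zero {X : Type*} [MeasurableSpace X]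
    [PseudoMetricSpace X] [OpensMeasurableSpace X] {Y Z : ℕ → X} {ν : ProbabilityMeasure X}
    (hYZ : Tendsto (fun n => dist (Y n) (Z n)) atTop (𝓝 0))
    (hZ : Tendsto (empiricalMeasure Z) atTop (𝓝 ν)) :
    Tendsto (empiricalMeasure Y) atTop (𝓝 ν) := by
  rw [tendsto_iff_forall_lipschitz_integral_tendsto] at hZ ⊢
  rintro f hf_bdd ⟨C, hf⟩
  have f_sub : Tendsto (fun n => f (Y n) - f (Z n)) atTop (𝓝 0) :=
    squeeze_zero_norm (fun n => hf.dist_le_mul _ _) (by simpa using hYZ.const_mul (C : ℝ))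
  have average_sub := f_sub.cesaro.comp (tendsto_add_atTop_nat 1)
  have limit := average_sub.add (hZ f hf_bdd ⟨C, hf⟩)
  rw [zero_add] at limit
  refine limit.congr fun N => ?_
  rw [integral_empiricalMeasure _ _ hf.continuous.stronglyMeasurable,
    integral_empiricalMeasure _ _ hf.continuous.stronglyMeasurable]
  simp only [Function.comp_apply, Finset.sum_sub_distrib, smul_eq_mul]
  ring

lemma tendsto_inv_smul_geom_sum_zero {z : ℂ} (hz : ‖z‖ ≤ 1) (hz1 : z ≠ 1) :
    Tendsto (fun N : ℕ => (N : ℝ)⁻¹ • ∑ n ∈ Finset.range N, z ^ n) atTop (𝓝 0) := by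
  have bounded : IsBoundedUnder (· ≤ ·) atTop
      (norm ∘ fun N : ℕ => ∑ n ∈ Finset.range N, z ^ n) := by
    refine isBoundedUnder_of ⟨2 / ‖z - 1‖, fun N => ?_⟩
    rw [Function.comp_apply, geom_sum_eq hz1, norm_div]
    gcongr
    calc ‖z ^ N - 1‖ ≤ ‖z‖ ^ N + 1 := by simpa using norm_sub_le (z ^ N) 1
      _ ≤ 2 := by linarith [pow_le_one₀ (n := N) (norm_nonneg z) hz]
  exact tendsto_inv_atTop_nhds_zero_nat.zero_smul_isBoundedUnder_le bounded

lemma integral_fourier_haarAddCircle {m : ℤ} (hm : m ≠ 0) :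
    ∫ x : AddCircle T, fourier m x ∂AddCircle.haarAddCircle = 0 :=
  integral_eq_zero_of_add_right_eq_neg (fourier_add_half_inv_index hm Fact.out)

lemma fourier_add_nsmul {T : ℝ} (m : ℤ) (n : ℕ) (x y : AddCircle T) :
    fourier m (y + n • x) = fourier m y * fourier m x ^ n := by
  simp only [fourier_apply, smul_add, smul_comm m n x, AddCircle.toCircle_add,
    AddCircle.toCircle_nsmul, Circle.coe_mul, Circle.coe_pow]

lemma fourier_ne_one {m : ℤ} (hm : m ≠ 0) {x : AddCircle T} (hx : ¬IsOfFinAddOrder x) :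
    fourier m x ≠ 1 := by
  intro h
  rw [fourier_apply, Circle.coe_eq_one, ← AddCircle.toCircle_zero (T := T)] at h
  exact hx (isOfFinAddOrder_iff_zsmul_eq_zero.2
    ⟨m, hm, AddCircle.injective_toCircle (Fact.out : 0 < T).ne' h⟩)

variable (T) in
/-- The uniform distribution on the circle `ℝ / Tℤ`. -/
noncomputable def uniformOnCircle : ProbabilityMeasure (AddCircle T) :=
  ⟨AddCircle.haarAddCircle, inferInstance⟩

lemma coe_uniformOnCircle : (uniformOnCircle T : Measure (AddCircle T)) = AddCircle.haarAddCircle :=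
  rfl

theorem tendsto_empiricalMeasure_add_nsmul {x : AddCircle T} (hx : ¬IsOfFinAddOrder x)
    (y : AddCircle T) :
    Tendsto (empiricalMeasure fun n => y + n • x) atTop (𝓝 (uniformOnCircle T)) := by
  refine tendsto_probabilityMeasure_of_forall_tendsto_integral_fourier fun m => ?_
  rcases eq_or_ne m 0 with rfl | hm
  · simp
  have norm_fourier : ‖fourier m x‖ = 1 := by rw [fourier_apply, Circle.norm_coe]
  have average := ((tendsto_inv_smul_geom_sum_zero norm_fourier.le
    (fourier_ne_one hm hx)).const_mul (fourier m y)).comp (tendsto_add_atTop_nat 1)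
  rw [mul_zero] at average
  rw [coe_uniformOnCircle, integral_fourier_haarAddCircle hm]
  refine average.congr fun N => ?_
  rw [integral_empiricalMeasure _ _ (fourier m).continuous.stronglyMeasurable]
  simp only [Function.comp_apply, fourier_add_nsmul, mul_smul_comm, Finset.mul_sum]

end Equidistribution

section ArcsineLaw

local instance fact_two_pi_pos : Fact (0 < 2 * Real.pi) := ⟨Real.two_pi_pos⟩

/-- The cosine as a function on the circle `ℝ / 2πℤ`. -/
noncomputable def circleCos : C(AddCircle (2 * Real.pi), ℝ) where
  toFun := Real.cos_periodic.lift
  continuous_toFun := continuous_coinduced_dom.2 Real.continuous_cos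

lemma circleCos_coe (t : ℝ) : circleCos t = Real.cos t := Real.cos_periodic.lift_coe t

/-- The arcsine law on `[-D, D]`, as the law of `D cos θ` for a uniformly distributed angle `θ`. -/
noncomputable def arcsineMeasure (D : ℝ) : ProbabilityMeasure ℝ :=
  (uniformOnCircle (2 * Real.pi)).map (f := fun θ => D * circleCos θ)
    (circleCos.continuous.const_mul D).measurable.aemeasurable

lemma setIntegral_Ioc_neg_eq_two_mul_of_even {f : ℝ → ℝ} (hf : Function.Even f) (c : ℝ) :
    ∫ t in Set.Ioc (-c) c, f t = 2 * ∫ t in Set.Ioo 0 c, f t := by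
  have indicator_abs (t : ℝ) :
      (Set.Iic c).indicator f |t| = (Set.Icc (-c) c).indicator f t := by
    have apply_abs : f |t| = f t := by
      rcases abs_choice t with h | h <;> simp [h, hf t]
    simp only [Set.indicator, Set.mem_Iic, abs_le, Set.mem_Icc, apply_abs]
  have fold := integral_comp_abs (f := (Set.Iic c).indicator f)
  simp only [indicator_abs] at fold
  rwa [integral_indicator measurableSet_Icc, setIntegral_indicator measurableSet_Iic,
    Set.Ioi_inter_Iic, integral_Icc_eq_integral_Ioc,
    integral_Ioc_eq_integral_Ioo (x := 0)] at fold

lemma integral_comp_circleCos (f : ℝ → ℝ) :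
    ∫ θ, f (circleCos θ) ∂AddCircle.haarAddCircle =
      Real.pi⁻¹ * ∫ t in Set.Ioo 0 Real.pi, f (Real.cos t) := by
  have even : Function.Even fun t => f (Real.cos t) := fun t =>
    congrArg f (Real.cos_neg t)
  have lift := AddCircle.integral_preimage (2 * Real.pi) (-Real.pi) fun θ => f (circleCos θ)
  simp only [circleCos_coe] at lift
  rw [AddCircle.integral_haarAddCircle, ← lift, show -Real.pi + 2 * Real.pi = Real.pi by ring,
    setIntegral_Ioc_neg_eq_two_mul_of_even even, smul_eq_mul]
  field_simp

lemma image_mul_cos_Ioo {D : ℝ} (hD : 0 < D) :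
    (fun t => D * Real.cos t) '' Set.Ioo 0 Real.pi = Set.Ioo (-D) D := by
  rw [← Set.image_image (D * ·), show Real.cos '' Set.Ioo 0 Real.pi = Set.Ioo (-1) 1 from
    Real.cosPartialHomeomorph.image_source_eq_target, Set.image_mul_left_Ioo hD]
  simp

lemma setIntegral_comp_mul_cos {D : ℝ} (hD : 0 < D) (f : ℝ → ℝ) :
    ∫ t in Set.Ioo 0 Real.pi, f (D * Real.cos t) =
      ∫ x in Set.Ioo (-D) D, f x / √(D ^ 2 - x ^ 2) := by
  have hasDeriv (t : ℝ) : HasDerivAt (fun t => D * Real.cos t) (-(D * Real.sin t)) t := by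
    simpa using (Real.hasDerivAt_cos t).const_mul D
  have injOn : Set.InjOn (fun t => D * Real.cos t) (Set.Ioo 0 Real.pi) := fun s hs t ht h =>
    Real.injOn_cos (Set.Ioo_subset_Icc_self hs) (Set.Ioo_subset_Icc_self ht)
      (mul_left_cancel₀ hD.ne' h)
  rw [← image_mul_cos_Ioo hD, integral_image_eq_integral_abs_deriv_smul measurableSet_Ioo
    (fun t _ => (hasDeriv t).hasDerivWithinAt) injOn]
  refine setIntegral_congr_fun measurableSet_Ioo fun t ht => ?_
  have sin_pos : 0 < D * Real.sin t := mul_pos hD (Real.sin_pos_of_mem_Ioo ht)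
  have sqrt_eq : √(D ^ 2 - (D * Real.cos t) ^ 2) = D * Real.sin t := by
    rw [← Real.sqrt_sq sin_pos.le, mul_pow, mul_pow, Real.sin_sq]
    ring_nf
  simp only [sqrt_eq, abs_neg, abs_of_pos sin_pos, smul_eq_mul, mul_div_cancel₀ _ sin_pos.ne']

lemma real_arcsineMeasure {D : ℝ} (hD : 0 < D) {s : Set ℝ} (hs : MeasurableSet s) :
    (arcsineMeasure D : Measure ℝ).real s =
      ∫ x in Set.Ioo (-D) D ∩ s, 1 / (Real.pi * √(D ^ 2 - x ^ 2)) := by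
  rw [← integral_indicator_one hs, arcsineMeasure, ProbabilityMeasure.toMeasure_map,
    integral_map (circleCos.continuous.const_mul D).measurable.aemeasurable
      (stronglyMeasurable_one.indicator hs).aestronglyMeasurable, coe_uniformOnCircle,
    integral_comp_circleCos fun x => s.indicator 1 (D * x), setIntegral_comp_mul_cos hD,
    ← integral_const_mul, ← setIntegral_indicator hs]
  congr with x
  by_cases hx : x ∈ s <;> simp [hx, mul_comm]

lemma arcsineMeasure_eq_zero {D : ℝ} (hD : 0 < D) {s : Set ℝ} (hs : MeasurableSet s)
    (hs_zero : volume s = 0) : (arcsineMeasure D : Measure ℝ) s = 0 := by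
  rw [← measureReal_eq_zero_iff, real_arcsineMeasure hD hs]
  exact setIntegral_measure_zero _ (measure_mono_null Set.inter_subset_right hs_zero)

lemma tendsto_empiricalMeasure_mul_cos {ξ : ℝ} (hξ : Irrational (ξ / (2 * Real.pi))) (β D : ℝ) :
    Tendsto (empiricalMeasure fun n => D * Real.cos (ξ * n + β)) atTop
      (𝓝 (arcsineMeasure D)) := by
  have infinite_order : ¬IsOfFinAddOrder (ξ : AddCircle (2 * Real.pi)) := by
    rw [AddCircle.not_isOfFinAddOrder_iff_forall_rat_ne_div]
    exact fun q hq => hξ ⟨q, hq⟩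
  have continuous : Continuous fun θ => D * circleCos θ := circleCos.continuous.const_mul D
  have limit := ProbabilityMeasure.tendsto_map_of_tendsto_of_continuous _ _
    (tendsto_empiricalMeasure_add_nsmul infinite_order (β : AddCircle (2 * Real.pi))) continuous
  refine limit.congr fun N => ?_
  rw [map_empiricalMeasure _ _ continuous.measurable]
  refine congrArg (empiricalMeasure · N) (funext fun n => ?_)
  rw [Function.comp_apply, ← AddCircle.coe_nsmul, ← AddCircle.coe_add, circleCos_coe,
    nsmul_eq_mul, add_comm, mul_comm ξ]

theorem tendsto_average_indicator_Ioo_arcsine {ξ β D A B : ℝ} {Y : ℕ → ℝ}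
    (hξ : Irrational (ξ / (2 * Real.pi))) (hAB : A < B) (hA : -D ≤ A) (hB : B ≤ D)
    (hY : Tendsto (fun n => Y n - D * Real.cos (ξ * n + β)) atTop (𝓝 0)) :
    Tendsto (fun N : ℕ => (N : ℝ)⁻¹ *
        ∑ n ∈ Finset.range N, (Set.Ioo A B).indicator (fun _ => (1 : ℝ)) (Y n))
      atTop (𝓝 (∫ x in A..B, 1 / (Real.pi * √(D ^ 2 - x ^ 2)))) := by
  have hD : 0 < D := by linarith
  have weak : Tendsto (empiricalMeasure Y) atTop (𝓝 (arcsineMeasure D)) :=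
    tendsto_empiricalMeasure_of_dist_tendsto_zero (by simpa [Real.dist_eq] using hY.abs)
      (tendsto_empiricalMeasure_mul_cos hξ β D)
  have null_frontier : (arcsineMeasure D : Measure ℝ) (frontier (Set.Ioo A B)) = 0 := by
    rw [frontier_Ioo hAB]
    exact arcsineMeasure_eq_zero hD (by measurability) ((Set.toFinite _).measure_zero _)
  have limit := (ENNReal.tendsto_toReal (measure_ne_top _ _)).comp
    (ProbabilityMeasure.tendsto_measure_of_null_frontier_of_tendsto' weak null_frontier)
  have mass : (arcsineMeasure D : Measure ℝ).real (Set.Ioo A B) =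
      ∫ x in A..B, 1 / (Real.pi * √(D ^ 2 - x ^ 2)) := by
    rw [real_arcsineMeasure hD measurableSet_Ioo, intervalIntegral.integral_of_le hAB.le,
      integral_Ioc_eq_integral_Ioo, Set.inter_eq_self_of_subset_right (Set.Ioo_subset_Ioo hA hB)]
  rw [← mass, ← tendsto_add_atTop_iff_nat 1]
  exact limit.congr fun N => real_empiricalMeasure Y N measurableSet_Ioo

end ArcsineLaw

section RankOnePerturbation

open InnerProductSpace ContinuousLinearMap
open scoped InnerProductSpace InnerProduct

variable {V W : Type*} [NormedAddCommGroup V] [InnerProductSpace ℝ V]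
  [NormedAddCommGroup W] [InnerProductSpace ℝ W]

lemma one_sub_rankOne_self_apply (w x : V) :
    ((1 : V →L[ℝ] V) - rankOne ℝ w w) x = x - ⟪w, x⟫_ℝ • w := rfl

lemma norm_sub_inner_smul_sq {w : V} (hw : ‖w‖ = 1) (x : V) :
    ‖x - ⟪w, x⟫_ℝ • w‖ ^ 2 = ‖x‖ ^ 2 - ⟪w, x⟫_ℝ ^ 2 := by
  rw [norm_sub_sq_real, real_inner_smul_right, real_inner_comm, norm_smul, hw, Real.norm_eq_abs,
    mul_one, sq_abs]
  ring

lemma norm_one_sub_rankOne_self_le_one {w : V} (hw : ‖w‖ = 1) :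
    ‖(1 : V →L[ℝ] V) - rankOne ℝ w w‖ ≤ 1 := by
  refine opNorm_le_bound _ zero_le_one fun x => ?_
  rw [one_sub_rankOne_self_apply, one_mul, ← sq_le_sq₀ (norm_nonneg _) (norm_nonneg _),
    norm_sub_inner_smul_sq hw]
  linarith [sq_nonneg ⟪w, x⟫_ℝ]

lemma norm_sub_inner_smul_comm {w x : V} (hw : ‖w‖ = 1) (hx : ‖x‖ = 1) :
    ‖w - ⟪x, w⟫_ℝ • x‖ = ‖x - ⟪w, x⟫_ℝ • w‖ := by
  rw [← sq_eq_sq₀ (norm_nonneg _) (norm_nonneg _), norm_sub_inner_smul_sq hw,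
    norm_sub_inner_smul_sq hx, hw, hx, real_inner_comm]

lemma norm_rankOne_self_sub_rankOne_self_le {w x : V} (hw : ‖w‖ = 1) (hx : ‖x‖ = 1) :
    ‖rankOne ℝ x x - rankOne ℝ w w‖ ≤ 2 * ‖x - ⟪w, x⟫_ℝ • w‖ := by
  have split : rankOne ℝ x x - rankOne ℝ w w =
      rankOne ℝ (x - ⟪w, x⟫_ℝ • w) x - rankOne ℝ w (w - ⟪x, w⟫_ℝ • x) := by
    simp only [map_sub, map_smul, _root_.sub_apply, _root_.smul_apply,
      real_inner_comm]
    abel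
  calc ‖rankOne ℝ x x - rankOne ℝ w w‖
      ≤ ‖x - ⟪w, x⟫_ℝ • w‖ * ‖x‖ + ‖w‖ * ‖w - ⟪x, w⟫_ℝ • x‖ := by
        rw [split, ← norm_rankOne (𝕜 := ℝ), ← norm_rankOne (𝕜 := ℝ)]
        exact norm_sub_le _ _
    _ = 2 * ‖x - ⟪w, x⟫_ℝ • w‖ := by rw [norm_sub_inner_smul_comm hw hx, hw, hx]; ring

lemma rankOne_eq_norm_mul_norm_smul (w : V) (z : W) :
    rankOne ℝ w z = (‖w‖ * ‖z‖) • rankOne ℝ (‖w‖⁻¹ • w) (‖z‖⁻¹ • z) := by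
  rcases eq_or_ne w 0 with rfl | hw
  · simp
  rcases eq_or_ne z 0 with rfl | hz
  · simp
  have coeff : ‖w‖ * ‖z‖ * (‖w‖⁻¹ * ‖z‖⁻¹) = 1 := by
    field_simp [norm_ne_zero_iff.2 hw, norm_ne_zero_iff.2 hz]
  simp only [map_smul, _root_.smul_apply, smul_smul]
  rw [mul_comm ‖z‖⁻¹, ← mul_assoc, mul_assoc, coeff, one_smul]

lemma sub_norm_le_norm_smul_rankOne_add {w : V} {z : W} (hw : ‖w‖ = 1) (hz : ‖z‖ = 1) {σ : ℝ}
    (hσ : 0 ≤ σ) (E : W →L[ℝ] V) : σ - ‖E‖ ≤ ‖σ • rankOne ℝ w z + E‖ := by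
  have norm_main : ‖σ • rankOne ℝ w z‖ = σ := by
    rw [norm_smul, norm_rankOne, hw, hz, Real.norm_of_nonneg hσ, mul_one, mul_one]
  simpa [norm_main] using norm_sub_norm_le (σ • rankOne ℝ w z) (-E)

lemma one_sub_rankOne_self_comp_add {w : V} (hw : ‖w‖ = 1) (z : W) (σ : ℝ) (E : W →L[ℝ] V) :
    ((1 : V →L[ℝ] V) - rankOne ℝ w w) ∘L (σ • rankOne ℝ w z + E) =
      ((1 : V →L[ℝ] V) - rankOne ℝ w w) ∘L E := by
  have apply_self : ((1 : V →L[ℝ] V) - rankOne ℝ w w) w = 0 := by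
    rw [one_sub_rankOne_self_apply, real_inner_self_eq_norm_sq, hw, one_pow, one_smul, sub_self]
  rw [comp_add, comp_smul, comp_rankOne, apply_self, map_zero, _root_.zero_apply, smul_zero,
    zero_add]

variable [CompleteSpace V] [CompleteSpace W]

/-- A unit vector `u` at which the adjoint of `T` attains its operator norm, that is, a left
singular vector of `T` for the largest singular value `‖T‖`. -/
structure IsLeadingLeftSingularVector (T : W →L[ℝ] V) (u : V) : Prop where
  norm_eq_one : ‖u‖ = 1
  norm_adjoint_apply : ‖(T†) u‖ = ‖T‖

namespace IsLeadingLeftSingularVector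

variable {T : W →L[ℝ] V} {u : V}

lemma apply_adjoint_apply (hu : IsLeadingLeftSingularVector T u) :
    T ((T†) u) = ‖T‖ ^ 2 • u := by
  have inner_eq : ⟪T ((T†) u), u⟫_ℝ = ‖T‖ ^ 2 := by
    rw [← adjoint_inner_right, real_inner_self_eq_norm_sq, hu.norm_adjoint_apply]
  have norm_le : ‖T ((T†) u)‖ ≤ ‖T‖ ^ 2 := by
    simpa [hu.norm_adjoint_apply, sq] using T.le_opNorm ((T†) u)
  have dist_sq : ‖T ((T†) u) - ‖T‖ ^ 2 • u‖ ^ 2 ≤ 0 := by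
    rw [norm_sub_sq_real, real_inner_smul_right, inner_eq, norm_smul, hu.norm_eq_one]
    simp only [norm_pow, norm_norm, mul_one]
    nlinarith [norm_nonneg (T ((T†) u))]
  exact sub_eq_zero.1 (norm_eq_zero.1 (sq_nonpos_iff _ |>.1 dist_sq))

lemma adjoint (hu : IsLeadingLeftSingularVector T u) (hT : 0 < ‖T‖) :
    IsLeadingLeftSingularVector (T†) (‖T‖⁻¹ • (T†) u) where
  norm_eq_one := by
    rw [norm_smul, hu.norm_adjoint_apply, norm_inv, norm_norm, inv_mul_cancel₀ hT.ne']
  norm_adjoint_apply := by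
    rw [adjoint_adjoint, map_smul, hu.apply_adjoint_apply, norm_smul, norm_smul, hu.norm_eq_one,
      LinearIsometryEquiv.norm_map]
    simp only [norm_inv, norm_pow, norm_norm]
    field_simp

variable {w : V} {z : W} {σ : ℝ} {E : W →L[ℝ] V}

lemma norm_sub_inner_smul_le (hw : ‖w‖ = 1) (hz : ‖z‖ = 1) (hσ : 0 < σ) (hE : 2 * ‖E‖ ≤ σ)
    (hu : IsLeadingLeftSingularVector (σ • rankOne ℝ w z + E) u) :
    ‖u - ⟪w, u⟫_ℝ • w‖ ≤ 2 * ‖E‖ / σ := by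
  set T := σ • rankOne ℝ w z + E
  have half_le : σ / 2 ≤ ‖T‖ := by
    linarith [sub_norm_le_norm_smul_rankOne_add hw hz hσ.le E]
  have T_pos : 0 < ‖T‖ := by linarith
  have eigen : ‖T‖ ^ 2 • (u - ⟪w, u⟫_ℝ • w) =
      ((1 : V →L[ℝ] V) - rankOne ℝ w w) (E ((T†) u)) := by
    rw [← one_sub_rankOne_self_apply, ← map_smul, ← hu.apply_adjoint_apply]
    exact DFunLike.congr_fun (one_sub_rankOne_self_comp_add hw z σ E) ((T†) u)
  have bound : ‖T‖ ^ 2 * ‖u - ⟪w, u⟫_ℝ • w‖ ≤ ‖E‖ * ‖T‖ := by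
    calc ‖T‖ ^ 2 * ‖u - ⟪w, u⟫_ℝ • w‖
        = ‖((1 : V →L[ℝ] V) - rankOne ℝ w w) (E ((T†) u))‖ := by
          rw [← eigen, norm_smul, norm_pow, norm_norm]
      _ ≤ 1 * (‖E‖ * ‖(T†) u‖) :=
          (le_of_opNorm_le _ (norm_one_sub_rankOne_self_le_one hw) _).trans <| by
            gcongr; exact E.le_opNorm _
      _ = ‖E‖ * ‖T‖ := by rw [hu.norm_adjoint_apply, one_mul]
  have cancelled : ‖T‖ * ‖u - ⟪w, u⟫_ℝ • w‖ ≤ ‖E‖ :=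
    le_of_mul_le_mul_left (by linarith) T_pos
  rw [le_div_iff₀ hσ]
  nlinarith [norm_nonneg (u - ⟪w, u⟫_ℝ • w)]

lemma rankOne_self_comp (hu : IsLeadingLeftSingularVector T u) (hT : 0 < ‖T‖) :
    rankOne ℝ u u ∘L T =
      T ∘L rankOne ℝ (‖T‖⁻¹ • (T†) u) (‖T‖⁻¹ • (T†) u) := by
  rw [rankOne_comp, comp_rankOne, map_smul T, hu.apply_adjoint_apply, smul_smul, map_smul,
    map_smul, _root_.smul_apply, smul_smul]
  field_simp
  rw [one_smul]

lemma norm_adjoint_apply_sub_inner_smul_le (hw : ‖w‖ = 1) (hz : ‖z‖ = 1) (hσ : 0 < σ)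
    (hE : 2 * ‖E‖ ≤ σ) (hu : IsLeadingLeftSingularVector (σ • rankOne ℝ w z + E) u) :
    ‖((σ • rankOne ℝ w z + E)†) (w - ⟪u, w⟫_ℝ • u)‖ ≤ 6 * ‖E‖ ^ 2 / σ := by
  set s := ‖u - ⟪w, u⟫_ℝ • w‖ with hs
  have s_le : s ≤ 2 * ‖E‖ / σ := norm_sub_inner_smul_le hw hz hσ hE hu
  have norm_eq : ‖w - ⟪u, w⟫_ℝ • u‖ = s := norm_sub_inner_smul_comm hw hu.norm_eq_one
  have inner_eq : ⟪w, w - ⟪u, w⟫_ℝ • u⟫_ℝ = s ^ 2 := by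
    rw [hs, norm_sub_inner_smul_sq hw, inner_sub_right, real_inner_smul_right,
      real_inner_self_eq_norm_sq, hw, hu.norm_eq_one, real_inner_comm]
    ring
  have apply_eq : ((σ • rankOne ℝ w z + E)†) (w - ⟪u, w⟫_ℝ • u) =
      (σ * s ^ 2) • z + (E†) (w - ⟪u, w⟫_ℝ • u) := by
    simp [-map_sub, inner_eq, mul_smul]
  calc ‖((σ • rankOne ℝ w z + E)†) (w - ⟪u, w⟫_ℝ • u)‖
      ≤ σ * s ^ 2 + ‖E‖ * s := by
        rw [apply_eq]
        refine norm_add_le_of_le ?_ ?_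
        · rw [norm_smul, hz, mul_one, Real.norm_of_nonneg (by positivity)]
        · simpa only [norm_eq, LinearIsometryEquiv.norm_map] using
            (E†).le_opNorm (w - ⟪u, w⟫_ℝ • u)
    _ ≤ σ * (2 * ‖E‖ / σ) ^ 2 + ‖E‖ * (2 * ‖E‖ / σ) := by gcongr
    _ = 6 * ‖E‖ ^ 2 / σ := by field_simp; ring

lemma rankOne_self_comp_sub_sub_eq (hw : ‖w‖ = 1) (hT : 0 < ‖σ • rankOne ℝ w z + E‖)
    (hu : IsLeadingLeftSingularVector (σ • rankOne ℝ w z + E) u) {v : W}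
    (hv : v = ‖σ • rankOne ℝ w z + E‖⁻¹ • ((σ • rankOne ℝ w z + E)†) u) :
    rankOne ℝ u u ∘L (σ • rankOne ℝ w z + E) - σ • rankOne ℝ w z -
        (rankOne ℝ w w ∘L E + (1 - rankOne ℝ w w) ∘L E ∘L rankOne ℝ z z) =
      (1 - rankOne ℝ w w) ∘L E ∘L (rankOne ℝ v v - rankOne ℝ z z) -
        rankOne ℝ w (((σ • rankOne ℝ w z + E)†) (w - ⟪u, w⟫_ℝ • u)) := by
  set T := σ • rankOne ℝ w z + E with hTdef
  set P := rankOne ℝ w w with hP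
  have off_range : (1 - P) ∘L rankOne ℝ u u ∘L T = (1 - P) ∘L E ∘L rankOne ℝ v v := by
    rw [hu.rankOne_self_comp hT, ← hv, ← comp_assoc, hTdef, one_sub_rankOne_self_comp_add hw,
      comp_assoc]
  have on_range : P ∘L (1 - rankOne ℝ u u) ∘L T = rankOne ℝ w ((T†) (w - ⟪u, w⟫_ℝ • u)) := by
    rw [← rankOne_comp, ← comp_assoc, comp_sub, hP, rankOne_comp_rankOne, one_def, comp_id,
      map_sub, map_smul, real_inner_comm]
  have main : P ∘L T = σ • rankOne ℝ w z + P ∘L E := by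
    rw [hTdef, comp_add, comp_smul, hP, rankOne_comp_rankOne, real_inner_self_eq_norm_sq, hw,
      one_pow, one_smul]
  rw [comp_sub, comp_sub, ← off_range, ← on_range]
  simp only [sub_comp, comp_sub, main, one_def, id_comp]
  abel

theorem norm_rankOne_self_comp_sub_sub_le (hw : ‖w‖ = 1) (hz : ‖z‖ = 1) (hσ : 0 < σ)
    (hE : 2 * ‖E‖ ≤ σ) (hu : IsLeadingLeftSingularVector (σ • rankOne ℝ w z + E) u) :
    ‖rankOne ℝ u u ∘L (σ • rankOne ℝ w z + E) - σ • rankOne ℝ w z -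
        (rankOne ℝ w w ∘L E + (1 - rankOne ℝ w w) ∘L E ∘L rankOne ℝ z z)‖ ≤
      10 * ‖E‖ ^ 2 / σ := by
  set T := σ • rankOne ℝ w z + E with hT
  have T_pos : 0 < ‖T‖ := by
    linarith [sub_norm_le_norm_smul_rankOne_add hw hz hσ.le E]
  set v := ‖T‖⁻¹ • (T†) u with hv
  have v_leading : IsLeadingLeftSingularVector (σ • rankOne ℝ z w + E†) v := by
    have adjoint_eq : T† = σ • rankOne ℝ z w + E† := by simp [hT]
    exact adjoint_eq ▸ hu.adjoint T_pos
  have v_close : ‖v - ⟪z, v⟫_ℝ • z‖ ≤ 2 * ‖E‖ / σ := by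
    simpa using v_leading.norm_sub_inner_smul_le hz hw hσ (by simpa using hE)
  rw [rankOne_self_comp_sub_sub_eq hw T_pos hu hv]
  calc ‖(1 - rankOne ℝ w w) ∘L E ∘L (rankOne ℝ v v - rankOne ℝ z z) -
        rankOne ℝ w ((T†) (w - ⟪u, w⟫_ℝ • u))‖
      ≤ 1 * (‖E‖ * (2 * (2 * ‖E‖ / σ))) + 6 * ‖E‖ ^ 2 / σ := by
        refine norm_sub_le_of_le ?_ ?_
        · refine (opNorm_comp_le _ _).trans ?_
          gcongr
          · exact norm_one_sub_rankOne_self_le_one hw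
          · refine (opNorm_comp_le _ _).trans ?_
            gcongr
            exact (norm_rankOne_self_sub_rankOne_self_le hz v_leading.norm_eq_one).trans (by gcongr)
        · rw [norm_rankOne, hw, one_mul]
          exact hu.norm_adjoint_apply_sub_inner_smul_le hw hz hσ hE
    _ = 10 * ‖E‖ ^ 2 / σ := by ring

end IsLeadingLeftSingularVector

end RankOnePerturbation

section EuclideanOperator

open InnerProductSpace
open scoped InnerProductSpace InnerProduct

variable {l m n : Type*} [Fintype l] [Fintype m] [Fintype n]

lemma inner_toLp (x y : n → ℝ) : ⟪WithLp.toLp 2 x, WithLp.toLp 2 y⟫_ℝ = x ⬝ᵥ y := by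
  rw [EuclideanSpace.inner_toLp_toLp, star_trivial, dotProduct_comm]

lemma norm_toLp_sq (x : n → ℝ) : ‖WithLp.toLp 2 x‖ ^ 2 = x ⬝ᵥ x := by
  rw [← real_inner_self_eq_norm_sq, inner_toLp]

lemma posSemidef_algebraMap_sub [DecidableEq n] {A : Matrix n n ℝ} (hA : A.IsHermitian) {μ : ℝ}
    (hμ : ∀ (ν : ℝ) (v : n → ℝ), v ≠ 0 → A *ᵥ v = ν • v → ν ≤ μ) :
    (algebraMap ℝ (Matrix n n ℝ) μ - A).PosSemidef := by
  open scoped MatrixOrder in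
  refine Matrix.le_iff.1 (le_algebraMap_of_spectrum_le (fun ν hν => ?_) hA)
  rw [← Matrix.spectrum_toLin', ← Module.End.hasEigenvalue_iff_mem_spectrum] at hν
  obtain ⟨v, hv⟩ := hν.exists_hasEigenvector
  exact hμ ν v hv.2 hv.apply_eq_smul

lemma dotProduct_mulVec_le {A : Matrix n n ℝ} (hA : A.IsHermitian) {μ : ℝ}
    (hμ : ∀ (ν : ℝ) (v : n → ℝ), v ≠ 0 → A *ᵥ v = ν • v → ν ≤ μ) (x : n → ℝ) :
    x ⬝ᵥ (A *ᵥ x) ≤ μ * (x ⬝ᵥ x) := by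
  classical
  have nonneg := (posSemidef_algebraMap_sub hA hμ).dotProduct_mulVec_nonneg x
  rw [Algebra.algebraMap_eq_smul_one, sub_mulVec, smul_mulVec, one_mulVec, dotProduct_sub,
    dotProduct_smul, star_trivial, smul_eq_mul] at nonneg
  exact sub_nonneg.1 nonneg

variable [DecidableEq n]

/-- A real matrix as a bounded operator between Euclidean spaces; the rectangular analogue of
`Matrix.toEuclideanCLM`. -/
noncomputable def euclideanOperator :
    Matrix m n ℝ ≃ₗ[ℝ] (EuclideanSpace ℝ n →L[ℝ] EuclideanSpace ℝ m) :=
  toEuclideanLin ≪≫ₗ LinearMap.toContinuousLinearMap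

lemma euclideanOperator_toLp (M : Matrix m n ℝ) (x : n → ℝ) :
    euclideanOperator M (WithLp.toLp 2 x) = WithLp.toLp 2 (M *ᵥ x) := rfl

lemma euclideanOperator_mul [DecidableEq m] (M : Matrix l m ℝ) (N : Matrix m n ℝ) :
    euclideanOperator (M * N) = euclideanOperator M ∘L euclideanOperator N := by
  ext x : 1
  exact congrArg (WithLp.toLp 2) (mulVec_mulVec x.ofLp M N).symm

lemma euclideanOperator_one : euclideanOperator (1 : Matrix n n ℝ) = 1 := by
  ext x : 1
  exact congrArg (WithLp.toLp 2) (one_mulVec x.ofLp)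

lemma euclideanOperator_vecMulVec (p : m → ℝ) (q : n → ℝ) :
    euclideanOperator (vecMulVec p q) = rankOne ℝ (WithLp.toLp 2 p) (WithLp.toLp 2 q) := by
  ext x i
  change (vecMulVec p q *ᵥ x.ofLp) i = ⟪WithLp.toLp 2 q, WithLp.toLp 2 x.ofLp⟫_ℝ * p i
  rw [inner_toLp, vecMulVec_mulVec, op_smul_eq_smul, Pi.smul_apply, smul_eq_mul]

lemma adjoint_euclideanOperator [DecidableEq m] (M : Matrix m n ℝ) :
    (euclideanOperator M)† = euclideanOperator Mᵀ := by
  refine ((ContinuousLinearMap.eq_adjoint_iff _ _).2 fun x y => ?_).symm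
  change ⟪WithLp.toLp 2 (Mᵀ *ᵥ x.ofLp), WithLp.toLp 2 y.ofLp⟫_ℝ =
    ⟪WithLp.toLp 2 x.ofLp, WithLp.toLp 2 (M *ᵥ y.ofLp)⟫_ℝ
  rw [inner_toLp, inner_toLp, mulVec_transpose, dotProduct_mulVec]

lemma abs_apply_le_norm_euclideanOperator (M : Matrix m n ℝ) (i : m) (k : n) :
    |M i k| ≤ ‖euclideanOperator M‖ := by
  have column_eq : euclideanOperator M (EuclideanSpace.single k 1) = WithLp.toLp 2 (M.col k) :=
    congrArg (WithLp.toLp 2) (mulVec_single_one M k)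
  calc |M i k| ≤ ‖euclideanOperator M (EuclideanSpace.single k 1)‖ := by
        rw [column_eq]
        exact PiLp.norm_apply_le (WithLp.toLp 2 (M.col k)) i
    _ ≤ ‖euclideanOperator M‖ := by
        simpa using (euclideanOperator M).le_opNorm (EuclideanSpace.single k 1)

lemma norm_euclideanOperator_le {M : Matrix m n ℝ} {c : ℝ} (hc : 0 ≤ c)
    (hM : ∀ i k, |M i k| ≤ c) :
    ‖euclideanOperator M‖ ≤ c * √(Fintype.card m * Fintype.card n) := by
  refine ContinuousLinearMap.opNorm_le_bound _ (by positivity) fun x => ?_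
  have coord_sq_le (i : m) : (M *ᵥ x.ofLp) i ^ 2 ≤ Fintype.card n * c ^ 2 * ‖x‖ ^ 2 :=
    calc (M *ᵥ x.ofLp) i ^ 2 ≤ (∑ k, M i k ^ 2) * ∑ k, x k ^ 2 :=
          Finset.sum_mul_sq_le_sq_mul_sq _ _ _
      _ ≤ (∑ _k : n, c ^ 2) * ∑ k, x k ^ 2 := by
          gcongr ?_ * _
          exact Finset.sum_le_sum fun k _ => sq_le_sq.2 ((hM i k).trans (le_abs_self c))
      _ = Fintype.card n * c ^ 2 * ‖x‖ ^ 2 := by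
          rw [EuclideanSpace.real_norm_sq_eq]; simp
  refine (sq_le_sq₀ (norm_nonneg _) (by positivity)).1 ?_
  calc ‖euclideanOperator M x‖ ^ 2 = ∑ i, (M *ᵥ x.ofLp) i ^ 2 :=
        EuclideanSpace.real_norm_sq_eq _
    _ ≤ ∑ _i : m, Fintype.card n * c ^ 2 * ‖x‖ ^ 2 := Finset.sum_le_sum fun i _ => coord_sq_le i
    _ = (c * √(Fintype.card m * Fintype.card n) * ‖x‖) ^ 2 := by
        rw [mul_pow, mul_pow, Real.sq_sqrt (by positivity)]
        simp only [Finset.sum_const, Finset.card_univ, nsmul_eq_mul]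
        ring

lemma norm_euclideanOperator_transpose_apply_sq (M : Matrix n m ℝ) (x : n → ℝ) :
    ‖euclideanOperator Mᵀ (WithLp.toLp 2 x)‖ ^ 2 = x ⬝ᵥ ((M * Mᵀ) *ᵥ x) := by
  rw [euclideanOperator_toLp, norm_toLp_sq, ← mulVec_mulVec, dotProduct_mulVec x,
    mulVec_transpose]

lemma isLeadingLeftSingularVector_of_isTopEigenvector {L K : ℕ} {M : Matrix (Fin L) (Fin K) ℝ}
    {u : Fin L → ℝ} (hu : IsTopEigenvector (M * Mᵀ) u) :
    IsLeadingLeftSingularVector (euclideanOperator M) (WithLp.toLp 2 u) := by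
  obtain ⟨unit, μ, eigen, largest⟩ := hu
  have norm_u : ‖WithLp.toLp 2 u‖ = 1 := by
    rw [← pow_eq_one_iff_of_nonneg (norm_nonneg _) two_ne_zero, EuclideanSpace.real_norm_sq_eq]
    exact unit
  have norm_sq_u : ‖euclideanOperator Mᵀ (WithLp.toLp 2 u)‖ ^ 2 = μ := by
    rw [norm_euclideanOperator_transpose_apply_sq, eigen, dotProduct_smul, ← norm_toLp_sq, norm_u]
    simp
  refine ⟨norm_u, le_antisymm ?_ ?_⟩
  · simpa [norm_u] using ((euclideanOperator M)†).le_opNorm (WithLp.toLp 2 u)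
  rw [← LinearIsometryEquiv.norm_map ContinuousLinearMap.adjoint, adjoint_euclideanOperator]
  refine ContinuousLinearMap.opNorm_le_bound _ (norm_nonneg _) fun x => ?_
  refine (sq_le_sq₀ (norm_nonneg _) (by positivity)).1 ?_
  calc ‖euclideanOperator Mᵀ (WithLp.toLp 2 x.ofLp)‖ ^ 2
      = x.ofLp ⬝ᵥ ((M * Mᵀ) *ᵥ x.ofLp) := norm_euclideanOperator_transpose_apply_sq M _
    _ ≤ μ * (x.ofLp ⬝ᵥ x.ofLp) :=
        dotProduct_mulVec_le (isHermitian_mul_conjTranspose_self M) largest _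
    _ = (‖euclideanOperator Mᵀ (WithLp.toLp 2 u)‖ * ‖x‖) ^ 2 := by
        rw [mul_pow, norm_sq_u, ← norm_toLp_sq]

end EuclideanOperator

section TangentProjection

variable {m n : Type*} [Fintype m] [Fintype n] [DecidableEq m]

/-- The matrix of the orthogonal projection onto the line spanned by `p` (zero if `p = 0`). -/
noncomputable def lineProj (p : m → ℝ) : Matrix m m ℝ := (p ⬝ᵥ p)⁻¹ • vecMulVec p p

/-- The orthogonal projection of `M` onto the tangent space at `vecMulVec p q` of the variety of
matrices of rank at most one, for nonzero `p` and `q`. It is the linear term in `M` of the best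
rank-one approximation of `vecMulVec p q + M`. -/
noncomputable def tangentProj (p : m → ℝ) (q : n → ℝ) (M : Matrix m n ℝ) : Matrix m n ℝ :=
  lineProj p * M + (1 - lineProj p) * M * lineProj q

lemma tangentProj_smul (p : m → ℝ) (q : n → ℝ) (c : ℝ) (M : Matrix m n ℝ) :
    tangentProj p q (c • M) = c • tangentProj p q M := by
  simp only [tangentProj, Matrix.mul_smul, Matrix.smul_mul, smul_add]

open InnerProductSpace in
lemma euclideanOperator_lineProj (p : m → ℝ) :
    euclideanOperator (lineProj p) =
      rankOne ℝ (‖WithLp.toLp 2 p‖⁻¹ • WithLp.toLp 2 p)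
        (‖WithLp.toLp 2 p‖⁻¹ • WithLp.toLp 2 p) := by
  rw [lineProj, map_smul, euclideanOperator_vecMulVec, ← norm_toLp_sq]
  simp [smul_smul, sq]

open InnerProductSpace in
theorem abs_vecMulVec_mul_sub_sub_tangentProj_le {L K : ℕ} {p : Fin L → ℝ} {q : Fin K → ℝ}
    {M : Matrix (Fin L) (Fin K) ℝ} {u : Fin L → ℝ} {η σ : ℝ} (hσ : 0 < σ)
    (hpq : σ ≤ ‖WithLp.toLp 2 p‖ * ‖WithLp.toLp 2 q‖)
    (hM : ‖euclideanOperator M‖ ≤ η) (hησ : 2 * η ≤ σ)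
    (hu : IsTopEigenvector ((vecMulVec p q + M) * (vecMulVec p q + M)ᵀ) u) (i : Fin L)
    (k : Fin K) :
    |(vecMulVec u u * (vecMulVec p q + M) - vecMulVec p q - tangentProj p q M) i k| ≤
      10 * η ^ 2 / σ := by
  set P := ‖WithLp.toLp 2 p‖ with hP
  set Q := ‖WithLp.toLp 2 q‖ with hQ
  have PQ_pos : 0 < P * Q := hσ.trans_le hpq
  have P_ne : P ≠ 0 := left_ne_zero_of_mul PQ_pos.ne'
  have Q_ne : Q ≠ 0 := right_ne_zero_of_mul PQ_pos.ne'
  have unit_p : ‖P⁻¹ • WithLp.toLp 2 p‖ = 1 := by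
    rw [norm_smul, norm_inv, hP, norm_norm, inv_mul_cancel₀ P_ne]
  have unit_q : ‖Q⁻¹ • WithLp.toLp 2 q‖ = 1 := by
    rw [norm_smul, norm_inv, hQ, norm_norm, inv_mul_cancel₀ Q_ne]
  have main_eq : euclideanOperator (vecMulVec p q) =
      (P * Q) • rankOne ℝ (P⁻¹ • WithLp.toLp 2 p) (Q⁻¹ • WithLp.toLp 2 q) := by
    rw [euclideanOperator_vecMulVec, rankOne_eq_norm_mul_norm_smul]
  have leading := isLeadingLeftSingularVector_of_isTopEigenvector hu
  rw [map_add, main_eq] at leading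
  refine (abs_apply_le_norm_euclideanOperator _ i k).trans ?_
  calc _ ≤ 10 * ‖euclideanOperator M‖ ^ 2 / (P * Q) := by
        simp only [tangentProj, map_sub, map_add, main_eq, euclideanOperator_mul,
          euclideanOperator_one, euclideanOperator_lineProj, euclideanOperator_vecMulVec u u,
          ← hP, ← hQ, ContinuousLinearMap.comp_assoc]
        exact leading.norm_rankOne_self_comp_sub_sub_le unit_p unit_q PQ_pos (by linarith)
    _ ≤ 10 * η ^ 2 / σ := by gcongr

end TangentProjection

section Hankelization

open Finset.HasAntidiagonal (antidiagonal)

variable {L K : ℕ}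

lemma hankelize_sub (Y Y' : Matrix (Fin L) (Fin K) ℝ) (j : ℕ) :
    hankelize (Y - Y') j = hankelize Y j - hankelize Y' j := by
  simp only [hankelize, ← sub_div, ← Finset.sum_sub_distrib, Matrix.sub_apply, ite_sub_ite,
    sub_zero]

lemma hankelize_smul (c : ℝ) (Y : Matrix (Fin L) (Fin K) ℝ) (j : ℕ) :
    hankelize (c • Y) j = c * hankelize Y j := by
  simp only [hankelize, ← mul_div_assoc, Finset.mul_sum, Matrix.smul_apply, smul_eq_mul, mul_ite,
    mul_zero]

lemma abs_hankelize_le {Y : Matrix (Fin L) (Fin K) ℝ} {ε : ℝ} (hε : 0 ≤ ε)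
    (hY : ∀ i k, |Y i k| ≤ ε) (j : ℕ) : |hankelize Y j| ≤ ε := by
  have count_nonneg : 0 ≤ ∑ i : Fin L, ∑ k : Fin K, if (i : ℕ) + k = j then (1 : ℝ) else 0 := by
    positivity
  rw [hankelize, abs_div, abs_of_nonneg count_nonneg]
  refine div_le_of_le_mul₀ count_nonneg hε ?_
  simp only [Finset.mul_sum]
  refine (Finset.abs_sum_le_sum_abs _ _).trans <| Finset.sum_le_sum fun i _ =>
    (Finset.abs_sum_le_sum_abs _ _).trans <| Finset.sum_le_sum fun k _ => ?_
  split_ifs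
  · simpa using hY i k
  · simp

variable {ℓ j : ℕ}

lemma sum_antidiagonal_of_add_eq (hL : ℓ < L) (hK : ℓ < K) (hj : j + ℓ + 2 = L + K)
    (f : ℕ → ℕ → ℝ) :
    ∑ i : Fin L, ∑ k : Fin K, (if (i : ℕ) + k = j then f i k else 0) =
      ∑ pq ∈ antidiagonal ℓ, f (L - 1 - pq.1) (K - 1 - pq.2) := by
  simp only [fun i : ℕ => Fin.sum_univ_eq_sum_range (fun k => if i + k = j then f i k else 0) K]
  rw [Fin.sum_univ_eq_sum_range
      (fun i => ∑ k ∈ Finset.range K, if i + k = j then f i k else 0) L,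
    ← Finset.sum_product', ← Finset.sum_filter]
  refine Finset.sum_nbij' (fun ik => (L - 1 - ik.1, K - 1 - ik.2))
    (fun pq => (L - 1 - pq.1, K - 1 - pq.2)) ?_ ?_ ?_ ?_ ?_
  all_goals
    simp only [Finset.mem_filter, Finset.mem_product, Finset.mem_range, Prod.forall,
      Finset.HasAntidiagonal.mem_antidiagonal, Prod.mk.injEq]
  iterate 4 omega
  intro i k hik
  congr 1 <;> omega

lemma hankelize_of_last (hL : ℓ < L) (hK : ℓ < K) (hj : j + ℓ + 2 = L + K) (f : ℕ → ℕ → ℝ) :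
    hankelize (Matrix.of fun (i : Fin L) (k : Fin K) => f i k) j =
      (∑ pq ∈ antidiagonal ℓ, f (L - 1 - pq.1) (K - 1 - pq.2)) / (ℓ + 1) := by
  simp only [hankelize, Matrix.of_apply]
  rw [sum_antidiagonal_of_add_eq hL hK hj, sum_antidiagonal_of_add_eq hL hK hj fun _ _ => 1]
  simp

lemma hankelize_hankelOf_last (hL : ℓ < L) (hK : ℓ < K) (hj : j + ℓ + 2 = L + K) (x : ℕ → ℝ) :
    hankelize (hankelOf x L K) j = x j := by
  have on_diagonal : ∀ pq ∈ antidiagonal ℓ, x (L - 1 - pq.1 + (K - 1 - pq.2)) = x j := by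
    intro pq hpq
    rw [Finset.HasAntidiagonal.mem_antidiagonal] at hpq
    congr 1
    omega
  rw [hankelOf, hankelize_of_last hL hK hj fun i k => x (i + k), Finset.sum_congr rfl on_diagonal,
    Finset.sum_const, Finset.Nat.card_antidiagonal, nsmul_eq_mul]
  push_cast
  field_simp

end Hankelization

section ReconstructionError

variable {a ξ φ δ : ℝ} {L K ℓ j : ℕ}

lemma hankelOf_expSignal (a : ℝ) (L K : ℕ) :
    hankelOf (expSignal a) L K = vecMulVec (Wvec a L) (Wvec a K) := by
  ext i k
  exact pow_add a i k

lemma pow_le_norm_Wvec (ha : 0 ≤ a) (M : ℕ) :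
    a ^ M ≤ ‖WithLp.toLp 2 (Wvec a (M + 1))‖ := by
  have last_le := PiLp.norm_apply_le (WithLp.toLp 2 (Wvec a (M + 1))) (Fin.last M)
  rwa [PiLp.toLp_apply, Wvec, Fin.val_last, Real.norm_of_nonneg (pow_nonneg ha M)] at last_le

lemma pow_le_norm_Wvec_mul_norm_Wvec (ha : 0 ≤ a) (hL : ℓ < L) (hK : ℓ < K)
    (hj : j + ℓ + 2 = L + K) :
    a ^ (j + ℓ) ≤ ‖WithLp.toLp 2 (Wvec a L)‖ * ‖WithLp.toLp 2 (Wvec a K)‖ := by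
  obtain ⟨L, rfl⟩ := Nat.exists_eq_add_one_of_ne_zero (Nat.ne_zero_of_lt hL)
  obtain ⟨K, rfl⟩ := Nat.exists_eq_add_one_of_ne_zero (Nat.ne_zero_of_lt hK)
  rw [show j + ℓ = L + K by omega, pow_add]
  gcongr <;> exact pow_le_norm_Wvec ha _

lemma norm_euclideanOperator_smul_cosNoise_le (ξ φ δ : ℝ) (L K : ℕ) :
    ‖euclideanOperator (δ • hankelOf (cosNoise ξ φ) L K)‖ ≤ |δ| * (L + K) := by
  have entry_le (i : Fin L) (k : Fin K) : |(δ • hankelOf (cosNoise ξ φ) L K) i k| ≤ |δ| := by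
    rw [Matrix.smul_apply, smul_eq_mul, abs_mul]
    exact mul_le_of_le_one_right (abs_nonneg δ) (Real.abs_cos_le_one _)
  have sqrt_le : √((L : ℝ) * K) ≤ L + K :=
    Real.sqrt_le_iff.2 ⟨by positivity, by
      nlinarith [L.cast_nonneg (α := ℝ), K.cast_nonneg (α := ℝ)]⟩
  calc ‖euclideanOperator (δ • hankelOf (cosNoise ξ φ) L K)‖
      ≤ |δ| * √((L : ℝ) * K) := by
        simpa using norm_euclideanOperator_le (abs_nonneg δ) entry_le
    _ ≤ |δ| * (L + K) := by gcongr

lemma abs_recErr_sub_le (ha : 0 < a) (hL : ℓ < L) (hK : ℓ < K) (hj : j + ℓ + 2 = L + K)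
    (hδ : 2 * (|δ| * (L + K)) ≤ a ^ (j + ℓ)) {u : Fin L → ℝ}
    (hu : IsTopEigenvector (HdeltaSq a ξ φ δ L K) u) :
    |recErr a ξ φ δ L K u j -
        δ * hankelize (tangentProj (Wvec a L) (Wvec a K) (hankelOf (cosNoise ξ φ) L K)) j| ≤
      10 * (|δ| * (L + K)) ^ 2 / a ^ (j + ℓ) := by
  have signal_eq : a ^ j = hankelize (vecMulVec (Wvec a L) (Wvec a K)) j := by
    rw [← hankelOf_expSignal, hankelize_hankelOf_last hL hK hj, expSignal]
  simp only [HdeltaSq, hankelOf_expSignal] at hu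
  rw [recErr, hankelOf_expSignal, signal_eq, ← hankelize_smul, ← tangentProj_smul,
    ← hankelize_sub, ← hankelize_sub]
  exact abs_hankelize_le (by positivity) (fun i k => abs_vecMulVec_mul_sub_sub_tangentProj_le
    (pow_pos ha _) (pow_le_norm_Wvec_mul_norm_Wvec ha.le hL hK hj)
    (norm_euclideanOperator_smul_cosNoise_le ξ φ δ L K) hδ hu i k) j

end ReconstructionError

section SeparableTangentProjection

variable {m n : Type*}

/-- The coefficient `c` for which `c • p` is the orthogonal projection of the complex vector `f`
onto the line spanned by the real vector `p` (zero if `p = 0`). -/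
noncomputable def projCoeff [Fintype m] (p : m → ℝ) (f : m → ℂ) : ℂ :=
  (∑ i, p i * f i) / (p ⬝ᵥ p : ℝ)

lemma projCoeff_const_mul [Fintype m] (p : m → ℝ) (c : ℂ) (f : m → ℂ) :
    projCoeff p (fun i => c * f i) = c * projCoeff p f := by
  simp only [projCoeff, mul_left_comm _ c, ← Finset.mul_sum, mul_div_assoc]

lemma lineProj_mul_of_re [Fintype m] (p : m → ℝ) (f : m → ℂ) (g : n → ℂ) :
    lineProj p * of (fun i k => (f i * g k).re) =
      of fun i k => (p i * projCoeff p f * g k).re := by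
  ext i k
  have expand : p i * projCoeff p f * g k =
      ∑ j, (((p ⬝ᵥ p)⁻¹ * (p i * p j) : ℝ) : ℂ) * (f j * g k) := by
    rw [projCoeff, div_eq_inv_mul, Finset.mul_sum, Finset.mul_sum, Finset.sum_mul]
    refine Finset.sum_congr rfl fun j _ => ?_
    push_cast
    ring
  rw [Matrix.mul_apply, of_apply, expand, Complex.re_sum]
  simp only [Complex.re_ofReal_mul]
  rfl

lemma transpose_lineProj [Fintype m] (p : m → ℝ) : (lineProj p)ᵀ = lineProj p := by
  rw [lineProj, transpose_smul, transpose_vecMulVec]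

lemma of_re_mul_lineProj [Fintype n] (q : n → ℝ) (f : m → ℂ) (g : n → ℂ) :
    of (fun i k => (f i * g k).re) * lineProj q =
      of fun i k => (f i * (q k * projCoeff q g)).re := by
  have transposed := congrArg transpose (lineProj_mul_of_re q g f)
  rw [transpose_mul, transpose_lineProj] at transposed
  simp only [mul_comm (f _)]
  exact transposed

lemma tangentProj_of_re [Fintype m] [Fintype n] [DecidableEq m] (p : m → ℝ) (q : n → ℝ) (c : ℂ)
    (f : m → ℂ) (g : n → ℂ) :
    tangentProj p q (of fun i k => (c * f i * g k).re) =
      of fun i k => (c * (p i * projCoeff p f * g k + f i * (q k * projCoeff q g) -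
        p i * projCoeff p f * (q k * projCoeff q g))).re := by
  rw [tangentProj, Matrix.mul_assoc, Matrix.sub_mul, Matrix.one_mul,
    of_re_mul_lineProj q (fun i => c * f i), lineProj_mul_of_re p (fun i => c * f i),
    lineProj_mul_of_re p (fun i => c * f i) fun k => q k * projCoeff q g, projCoeff_const_mul]
  ext i k
  simp only [Matrix.add_apply, Matrix.sub_apply, of_apply, ← Complex.add_re, ← Complex.sub_re]
  ring_nf

end SeparableTangentProjection

section LastDiagonals

open Finset.HasAntidiagonal (antidiagonal)

lemma sum_pow_eq_pow_mul_sum_inv_pow {𝕜 : Type*} [Field 𝕜] {x : 𝕜} (hx : x ≠ 0) (M : ℕ) :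
    ∑ i ∈ Finset.range (M + 1), x ^ i = x ^ M * ∑ i ∈ Finset.range (M + 1), x⁻¹ ^ i := by
  rw [← Finset.sum_range_reflect, Finset.mul_sum]
  refine Finset.sum_congr rfl fun i hi => ?_
  rw [inv_pow, Nat.add_sub_cancel, pow_sub₀ x hx (Finset.mem_range_succ_iff.1 hi)]

/-- The projection coefficient of `(ζ ^ i)` on `(a ^ i)`, `i < M`, normalized so that the last
entries of both vectors are `1`. -/
noncomputable def harmonicCoeff (a : ℝ) (ζ : ℂ) (M : ℕ) : ℂ :=
  (∑ i ∈ Finset.range M, (a * ζ)⁻¹ ^ i) / ∑ i ∈ Finset.range M, ((a : ℂ) * a)⁻¹ ^ i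

variable {a : ℝ} {ζ : ℂ}

lemma projCoeff_Wvec_pow (ha : a ≠ 0) (hζ : ζ ≠ 0) (M : ℕ) :
    projCoeff (Wvec a (M + 1)) (fun i => ζ ^ (i : ℕ)) =
      (ζ / a) ^ M * harmonicCoeff a ζ (M + 1) := by
  have ha' : (a : ℂ) ≠ 0 := Complex.ofReal_ne_zero.2 ha
  simp only [projCoeff, dotProduct, Wvec, Complex.ofReal_sum, Complex.ofReal_mul,
    Complex.ofReal_pow, ← mul_pow]
  rw [Fin.sum_univ_eq_sum_range (fun i => ((a : ℂ) * ζ) ^ i),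
    Fin.sum_univ_eq_sum_range (fun i => ((a : ℂ) * a) ^ i),
    sum_pow_eq_pow_mul_sum_inv_pow (mul_ne_zero ha' hζ),
    sum_pow_eq_pow_mul_sum_inv_pow (mul_ne_zero ha' ha'), mul_div_mul_comm, ← div_pow,
    mul_div_mul_left _ _ ha', harmonicCoeff]

/-- The complex amplitude of the average over the `ℓ`-th diagonal from the end of the tangent
projection of the harmonic Hankel matrix `(ζ ^ (i + k))`, as a function of the normalized
projection coefficients `x` and `y` of its columns and rows. -/
noncomputable def lastAmplitude (a : ℝ) (ζ : ℂ) (ℓ : ℕ) (x y : ℂ) : ℂ :=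
  (∑ pq ∈ antidiagonal ℓ, (a : ℂ)⁻¹ ^ pq.1 * ζ⁻¹ ^ pq.2) / (ℓ + 1) * (x + y) -
    (a : ℂ)⁻¹ ^ ℓ * (x * y)

lemma sum_antidiagonal_eq_lastAmplitude (a : ℝ) (ζ : ℂ) (ℓ : ℕ) (x y : ℂ) :
    (∑ pq ∈ antidiagonal ℓ, ((a : ℂ)⁻¹ ^ pq.1 * ζ⁻¹ ^ pq.2 * x + ζ⁻¹ ^ pq.1 * (a : ℂ)⁻¹ ^ pq.2 * y -
      (a : ℂ)⁻¹ ^ pq.1 * (a : ℂ)⁻¹ ^ pq.2 * (x * y))) / (ℓ + 1) = lastAmplitude a ζ ℓ x y := by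
  have swap : ∑ pq ∈ antidiagonal ℓ, ζ⁻¹ ^ pq.1 * (a : ℂ)⁻¹ ^ pq.2 =
      ∑ pq ∈ antidiagonal ℓ, (a : ℂ)⁻¹ ^ pq.1 * ζ⁻¹ ^ pq.2 := by
    rw [← Finset.Nat.sum_antidiagonal_swap]
    simp only [Prod.fst_swap, Prod.snd_swap, mul_comm]
  have diagonal : ∑ pq ∈ antidiagonal ℓ, (a : ℂ)⁻¹ ^ pq.1 * (a : ℂ)⁻¹ ^ pq.2 =
      (ℓ + 1) * (a : ℂ)⁻¹ ^ ℓ := by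
    rw [Finset.sum_congr rfl fun pq hpq => by
      rw [← pow_add, Finset.HasAntidiagonal.mem_antidiagonal.1 hpq]]
    simp
  have ℓ_succ_ne : (ℓ : ℂ) + 1 ≠ 0 := Nat.cast_add_one_ne_zero ℓ
  rw [Finset.sum_sub_distrib, Finset.sum_add_distrib, ← Finset.sum_mul, ← Finset.sum_mul,
    ← Finset.sum_mul, swap, diagonal, lastAmplitude]
  field_simp

lemma hankelOf_cosNoise (ξ φ : ℝ) (L K : ℕ) :
    hankelOf (cosNoise ξ φ) L K = of fun (i : Fin L) (k : Fin K) =>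
      (Complex.exp (φ * Complex.I) * Complex.exp (ξ * Complex.I) ^ (i : ℕ) *
        Complex.exp (ξ * Complex.I) ^ (k : ℕ)).re := by
  ext i k
  rw [hankelOf, of_apply, of_apply, cosNoise, mul_assoc, ← pow_add, ← Complex.exp_nat_mul,
    ← Complex.exp_add, ← Complex.exp_ofReal_mul_I_re]
  push_cast
  ring_nf

lemma pow_sub_mul_projCoeff_Wvec_pow (ha : a ≠ 0) (hζ : ζ ≠ 0) {p M : ℕ} (hp : p ≤ M) :
    (a : ℂ) ^ (M - p) * projCoeff (Wvec a (M + 1)) (fun i => ζ ^ (i : ℕ)) =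
      (a : ℂ)⁻¹ ^ p * ζ ^ M * harmonicCoeff a ζ (M + 1) := by
  have ha' : (a : ℂ) ≠ 0 := Complex.ofReal_ne_zero.2 ha
  rw [projCoeff_Wvec_pow ha hζ, pow_sub₀ _ ha' hp, div_pow, inv_pow]
  field_simp

lemma hankelize_tangentProj_harmonic_last {L K ℓ j : ℕ} (ha : a ≠ 0) (hζ : ζ ≠ 0) (c : ℂ)
    (hL : ℓ < L) (hK : ℓ < K) (hj : j + ℓ + 2 = L + K) :
    hankelize (tangentProj (Wvec a L) (Wvec a K)
        (of fun i k => (c * ζ ^ (i : ℕ) * ζ ^ (k : ℕ)).re)) j =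
      (c * ζ ^ (j + ℓ) *
        lastAmplitude a ζ ℓ (harmonicCoeff a ζ L) (harmonicCoeff a ζ K)).re := by
  obtain ⟨L, rfl⟩ := Nat.exists_eq_add_one_of_ne_zero (Nat.ne_zero_of_lt hL)
  obtain ⟨K, rfl⟩ := Nat.exists_eq_add_one_of_ne_zero (Nat.ne_zero_of_lt hK)
  rw [tangentProj_of_re]
  simp only [Wvec, Complex.ofReal_pow]
  set x := harmonicCoeff a ζ (L + 1)
  set y := harmonicCoeff a ζ (K + 1)
  set P := projCoeff (Wvec a (L + 1)) fun i => ζ ^ (i : ℕ)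
  set Q := projCoeff (Wvec a (K + 1)) fun i => ζ ^ (i : ℕ)
  have entry : ∀ pq ∈ antidiagonal ℓ,
      c * (a ^ (L - pq.1) * P * ζ ^ (K - pq.2) + ζ ^ (L - pq.1) * (a ^ (K - pq.2) * Q) -
        a ^ (L - pq.1) * P * (a ^ (K - pq.2) * Q)) =
      c * ζ ^ (j + ℓ) * ((a : ℂ)⁻¹ ^ pq.1 * ζ⁻¹ ^ pq.2 * x + ζ⁻¹ ^ pq.1 * (a : ℂ)⁻¹ ^ pq.2 * y -
        (a : ℂ)⁻¹ ^ pq.1 * (a : ℂ)⁻¹ ^ pq.2 * (x * y)) := by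
    rintro ⟨p, q⟩ hpq
    have p_add_q : p + q = ℓ := Finset.HasAntidiagonal.mem_antidiagonal.1 hpq
    have hpL : p ≤ L := by omega
    have hqK : q ≤ K := by omega
    rw [show j + ℓ = L + K by omega, pow_sub_mul_projCoeff_Wvec_pow ha hζ hpL,
      pow_sub_mul_projCoeff_Wvec_pow ha hζ hqK, pow_sub₀ ζ hζ hpL, pow_sub₀ ζ hζ hqK, pow_add,
      inv_pow ζ, inv_pow ζ]
    ring
  rw [hankelize_of_last hL hK hj fun i k =>
      (c * (a ^ i * P * ζ ^ k + ζ ^ i * (a ^ k * Q) - a ^ i * P * (a ^ k * Q))).re,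
    ← Complex.re_sum]
  simp only [Nat.add_sub_cancel]
  rw [Finset.sum_congr rfl entry, ← Finset.mul_sum, ← sum_antidiagonal_eq_lastAmplitude,
    ← mul_div_assoc]
  norm_cast
  rw [Complex.div_natCast_re]

end LastDiagonals

section LimitAmplitude

open Finset.HasAntidiagonal (antidiagonal)

variable {a : ℝ}

lemma tendsto_harmonicCoeff (ha : 1 < a) {ζ : ℂ} (hζ : ‖ζ‖ = 1) :
    Tendsto (harmonicCoeff a ζ) atTop (𝓝 ((1 - ((a : ℂ) * a)⁻¹) / (1 - (a * ζ)⁻¹))) := by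
  have norm_a : ‖(a : ℂ)‖ = a := Complex.norm_of_nonneg (zero_le_one.trans ha.le)
  have numerator : ‖((a : ℂ) * ζ)⁻¹‖ < 1 := by
    rw [norm_inv, norm_mul, norm_a, hζ, mul_one]
    exact inv_lt_one_of_one_lt₀ ha
  have denominator : ‖((a : ℂ) * a)⁻¹‖ < 1 := by
    rw [norm_inv, norm_mul, norm_a]
    exact inv_lt_one_of_one_lt₀ (one_lt_mul ha.le ha)
  have ne_one : 1 - ((a : ℂ) * a)⁻¹ ≠ 0 :=
    sub_ne_zero.2 fun h => by simp [← h] at denominator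
  have limit := (hasSum_geometric_of_norm_lt_one numerator).tendsto_sum_nat.div
    (hasSum_geometric_of_norm_lt_one denominator).tendsto_sum_nat (inv_ne_zero ne_one)
  rwa [inv_div_inv] at limit

lemma sq_add_one_sub_pos (ha : 1 < a) (ξ : ℝ) : 0 < a ^ 2 + 1 - 2 * a * Real.cos ξ := by
  nlinarith [Real.cos_le_one ξ]

lemma Gfun_pos (ha : 1 < a) (ξ : ℝ) : 0 < Gfun a ξ := by
  have numerator_pos : 0 < a ^ 2 - 1 := by nlinarith
  have := sq_add_one_sub_pos ha ξ
  unfold Gfun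
  positivity

lemma limit_harmonicCoeff_eq (ha : 1 < a) (ξ : ℝ) :
    (1 - ((a : ℂ) * a)⁻¹) / (1 - (a * Complex.exp (ξ * Complex.I))⁻¹) =
      Gfun a ξ * (a - Complex.exp (ξ * Complex.I)) := by
  set ζ := Complex.exp (ξ * Complex.I) with hζ
  have ζ_ne : ζ ≠ 0 := Complex.exp_ne_zero _
  have a_ne : (a : ℂ) ≠ 0 := by exact_mod_cast (zero_lt_one.trans ha).ne'
  have factor : ((a ^ 2 + 1 - 2 * a * Real.cos ξ : ℝ) : ℂ) * ζ = (a - ζ) * (a * ζ - 1) := by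
    have two_cos : 2 * (Real.cos ξ : ℂ) = ζ + ζ⁻¹ := by
      rw [Complex.ofReal_cos, Complex.two_cos, hζ, ← Complex.exp_neg, neg_mul]
    have two_cos_mul : 2 * (Real.cos ξ : ℂ) * ζ = ζ ^ 2 + 1 := by
      rw [two_cos]; field_simp
    push_cast at two_cos_mul ⊢
    linear_combination (-(a : ℂ)) * two_cos_mul
  have factor_ne : ((a ^ 2 + 1 - 2 * a * Real.cos ξ : ℝ) : ℂ) ≠ 0 :=
    Complex.ofReal_ne_zero.2 (sq_add_one_sub_pos ha ξ).ne'
  have pole_ne : a * ζ - 1 ≠ 0 := right_ne_zero_of_mul (factor ▸ mul_ne_zero factor_ne ζ_ne)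
  have G_eq : (Gfun a ξ : ℂ) = (a ^ 2 - 1) / (a * (a ^ 2 + 1 - 2 * a * Real.cos ξ : ℝ)) := by
    rw [Gfun]; push_cast; rfl
  have lhs_eq : (1 - ((a : ℂ) * a)⁻¹) / (1 - (a * ζ)⁻¹) = (a ^ 2 - 1) * ζ / (a * (a * ζ - 1)) := by
    field_simp
  rw [lhs_eq, G_eq, div_mul_eq_mul_div, div_eq_div_iff (by positivity) (by positivity)]
  linear_combination (a ^ 2 - 1) * a * factor

lemma sub_mul_sum_antidiagonal_inv_pow {𝕜 : Type*} [Field 𝕜] {x y : 𝕜} (hx : x ≠ 0) (hy : y ≠ 0)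
    (ℓ : ℕ) :
    (x - y) * ∑ pq ∈ antidiagonal ℓ, x⁻¹ ^ pq.1 * y⁻¹ ^ pq.2 = x * y⁻¹ ^ ℓ - y * x⁻¹ ^ ℓ := by
  have geometric : (∑ pq ∈ antidiagonal ℓ, x⁻¹ ^ pq.1 * y⁻¹ ^ pq.2) * (x⁻¹ - y⁻¹) =
      x⁻¹ ^ (ℓ + 1) - y⁻¹ ^ (ℓ + 1) := by
    rw [Finset.Nat.sum_antidiagonal_eq_sum_range_succ fun p q => x⁻¹ ^ p * y⁻¹ ^ q]
    exact geom_sum₂_mul x⁻¹ y⁻¹ (ℓ + 1)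
  have difference : x - y = -(x * y) * (x⁻¹ - y⁻¹) := by field_simp; ring
  rw [difference, mul_assoc, mul_comm (x⁻¹ - y⁻¹), geometric, pow_succ, pow_succ]
  field_simp
  ring

lemma C1_sub_I_mul_C2 (a ξ : ℝ) (ℓ : ℕ) :
    (C1 a ξ ℓ : ℂ) - Complex.I * C2 a ξ ℓ =
      2 / (ℓ + 1) * (a * (Complex.exp (ξ * Complex.I))⁻¹ ^ ℓ -
        Complex.exp (ξ * Complex.I) * (a : ℂ)⁻¹ ^ ℓ) -
      Gfun a ξ * (a : ℂ)⁻¹ ^ ℓ * (a - Complex.exp (ξ * Complex.I)) ^ 2 := by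
  have exp_eq : Complex.exp (ξ * Complex.I) = Complex.cos ξ + Complex.sin ξ * Complex.I :=
    Complex.exp_mul_I _
  have inv_pow_eq : (Complex.exp (ξ * Complex.I))⁻¹ ^ ℓ =
      Complex.cos (ℓ * ξ) - Complex.sin (ℓ * ξ) * Complex.I := by
    rw [← Complex.exp_neg, ← Complex.exp_nat_mul,
      show (ℓ : ℂ) * -(ξ * Complex.I) = -(ℓ * ξ) * Complex.I by ring, Complex.exp_mul_I,
      Complex.cos_neg, Complex.sin_neg]
    ring
  rw [inv_pow_eq, exp_eq, C1, C2]
  push_cast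
  rw [_root_.zpow_neg, _root_.zpow_natCast, inv_pow, add_comm (1 : ℂ) ℓ]
  linear_combination (Gfun a ξ * ((a : ℂ) ^ ℓ)⁻¹ * Complex.sin ξ ^ 2) * Complex.I_sq +
    (Gfun a ξ * ((a : ℂ) ^ ℓ)⁻¹) * Complex.sin_sq_add_cos_sq ξ

/-- The limit of `lastAmplitude` for the harmonic `cos (ξ n)` as both matrix sizes grow; its
modulus is `Dfun a ξ ℓ`. -/
noncomputable def limitAmplitude (a ξ : ℝ) (ℓ : ℕ) : ℂ :=
  Gfun a ξ * (C1 a ξ ℓ - Complex.I * C2 a ξ ℓ)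

lemma norm_limitAmplitude (ha : 1 < a) (ξ : ℝ) (ℓ : ℕ) : ‖limitAmplitude a ξ ℓ‖ = Dfun a ξ ℓ := by
  rw [limitAmplitude, norm_mul, Complex.norm_of_nonneg (Gfun_pos ha ξ).le, Dfun, sub_eq_add_neg,
    ← mul_neg, ← Complex.ofReal_neg, mul_comm Complex.I, Complex.norm_add_mul_I, neg_sq]

lemma lastAmplitude_eq_limitAmplitude (ha : 1 < a) (ξ : ℝ) (ℓ : ℕ) :
    lastAmplitude a (Complex.exp (ξ * Complex.I)) ℓ
        (Gfun a ξ * (a - Complex.exp (ξ * Complex.I)))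
        (Gfun a ξ * (a - Complex.exp (ξ * Complex.I))) = limitAmplitude a ξ ℓ := by
  have a_ne : (a : ℂ) ≠ 0 := by exact_mod_cast (zero_lt_one.trans ha).ne'
  rw [limitAmplitude, C1_sub_I_mul_C2, lastAmplitude,
    ← sub_mul_sum_antidiagonal_inv_pow a_ne (Complex.exp_ne_zero _)]
  ring

lemma tendsto_lastAmplitude {ι : Type*} {f : Filter ι} {L K : ι → ℕ} (ha : 1 < a) (ξ : ℝ) (ℓ : ℕ)
    (hL : Tendsto L f atTop) (hK : Tendsto K f atTop) :
    Tendsto (fun i => lastAmplitude a (Complex.exp (ξ * Complex.I)) ℓ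
        (harmonicCoeff a (Complex.exp (ξ * Complex.I)) (L i))
        (harmonicCoeff a (Complex.exp (ξ * Complex.I)) (K i)))
      f (𝓝 (limitAmplitude a ξ ℓ)) := by
  have coeff := tendsto_harmonicCoeff ha (Complex.norm_exp_ofReal_mul_I ξ)
  rw [limit_harmonicCoeff_eq ha] at coeff
  rw [← lastAmplitude_eq_limitAmplitude ha]
  have hx := coeff.comp hL
  have hy := coeff.comp hK
  exact ((hx.add hy).const_mul _).sub ((hx.mul hy).const_mul _)

end LimitAmplitude

section Convergence

variable {a ξ φ δ : ℝ} {ℓ : ℕ} {L K : ℕ → ℕ}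

lemma tendsto_add_pow_div_pow_atTop (ha : 1 < a) (k ℓ : ℕ) :
    Tendsto (fun n : ℕ => ((n + ℓ + 2 : ℕ) : ℝ) ^ k / a ^ (n + ℓ)) atTop (𝓝 0) := by
  have shifted := ((tendsto_pow_const_div_const_pow_of_one_lt k ha).comp
    (tendsto_add_atTop_nat (ℓ + 2))).const_mul (a ^ 2)
  rw [mul_zero] at shifted
  refine shifted.congr fun n => ?_
  have pow_ne : a ^ 2 ≠ 0 := pow_ne_zero 2 (zero_lt_one.trans ha).ne'
  rw [Function.comp_apply, ← add_assoc, pow_add a (n + ℓ), mul_comm (a ^ (n + ℓ)),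
    ← mul_div_assoc, mul_div_mul_left _ _ pow_ne]

lemma tendsto_recErr_div_sub_hankelize (ha : 1 < a) (hδ : δ ≠ 0) (hL : Tendsto L atTop atTop)
    (hK : Tendsto K atTop atTop) (hLK : ∀ᶠ n in atTop, n + ℓ + 2 = L n + K n)
    {u : ∀ n, Fin (L n) → ℝ}
    (hu : ∀ᶠ n in atTop, IsTopEigenvector (HdeltaSq a ξ φ δ (L n) (K n)) (u n)) :
    Tendsto (fun n => recErr a ξ φ δ (L n) (K n) (u n) n / δ - hankelize (tangentProj
      (Wvec a (L n)) (Wvec a (K n)) (hankelOf (cosNoise ξ φ) (L n) (K n))) n) atTop (𝓝 0) := by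
  have a_pos : 0 < a := zero_lt_one.trans ha
  have noise_small : ∀ᶠ n : ℕ in atTop, 2 * (|δ| * (n + ℓ + 2 : ℕ)) ≤ a ^ (n + ℓ) := by
    have ratio := (tendsto_add_pow_div_pow_atTop ha 1 ℓ).const_mul (2 * |δ|)
    rw [mul_zero] at ratio
    filter_upwards [ratio.eventually_le_const zero_lt_one] with n hn
    rwa [pow_one, ← mul_div_assoc, div_le_one (by positivity), mul_assoc] at hn
  have error_vanishes := (tendsto_add_pow_div_pow_atTop ha 2 ℓ).const_mul (10 * |δ|)
  rw [mul_zero] at error_vanishes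
  refine squeeze_zero_norm' ?_ error_vanishes
  filter_upwards [hLK, hu, noise_small, hL.eventually_gt_atTop ℓ, hK.eventually_gt_atTop ℓ]
    with n sizes top small ℓ_lt_L ℓ_lt_K
  have sizes_cast : ((n + ℓ + 2 : ℕ) : ℝ) = L n + K n := by rw [sizes, Nat.cast_add]
  rw [sizes_cast] at small ⊢
  have bound := abs_recErr_sub_le a_pos ℓ_lt_L ℓ_lt_K sizes small top
  rw [Real.norm_eq_abs, div_sub' hδ, abs_div, div_le_iff₀ (abs_pos.2 hδ)]
  exact bound.trans_eq (by ring)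

lemma tendsto_hankelize_tangentProj_sub (ha : 1 < a) (ξ φ : ℝ) (hL : Tendsto L atTop atTop)
    (hK : Tendsto K atTop atTop) (hLK : ∀ᶠ n in atTop, n + ℓ + 2 = L n + K n) :
    Tendsto (fun n => hankelize (tangentProj (Wvec a (L n)) (Wvec a (K n))
        (hankelOf (cosNoise ξ φ) (L n) (K n))) n -
      (Complex.exp (φ * Complex.I) * Complex.exp (ξ * Complex.I) ^ (n + ℓ) *
        limitAmplitude a ξ ℓ).re) atTop (𝓝 0) := by
  have amplitude := tendsto_iff_norm_sub_tendsto_zero.1 (tendsto_lastAmplitude ha ξ ℓ hL hK)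
  refine squeeze_zero_norm' ?_ amplitude
  filter_upwards [hLK, hL.eventually_gt_atTop ℓ, hK.eventually_gt_atTop ℓ]
    with n sizes ℓ_lt_L ℓ_lt_K
  rw [hankelOf_cosNoise, hankelize_tangentProj_harmonic_last (zero_lt_one.trans ha).ne'
    (Complex.exp_ne_zero _) _ ℓ_lt_L ℓ_lt_K sizes, ← Complex.sub_re, ← mul_sub]
  refine (Complex.abs_re_le_norm _).trans_eq ?_
  rw [norm_mul, norm_mul, norm_pow, Complex.norm_exp_ofReal_mul_I, Complex.norm_exp_ofReal_mul_I,
    one_pow, one_mul, one_mul]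

lemma re_exp_mul_exp_pow_mul (φ ξ : ℝ) (n : ℕ) (Z : ℂ) :
    (Complex.exp (φ * Complex.I) * Complex.exp (ξ * Complex.I) ^ n * Z).re =
      ‖Z‖ * Real.cos (ξ * n + φ + Z.arg) := by
  have polar : Complex.exp (φ * Complex.I) * Complex.exp (ξ * Complex.I) ^ n * Z =
      (‖Z‖ : ℝ) * Complex.exp ((ξ * n + φ + Z.arg : ℝ) * Complex.I) := by
    conv_lhs => rw [← Complex.norm_mul_exp_arg_mul_I Z]
    rw [← Complex.exp_nat_mul, ← Complex.exp_add, mul_left_comm, ← Complex.exp_add]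
    push_cast
    ring_nf
  rw [polar, Complex.re_ofReal_mul, Complex.exp_ofReal_mul_I_re]

theorem tendsto_recErr_div_sub_Dfun_mul_cos (ha : 1 < a) (hδ : δ ≠ 0)
    (hL : Tendsto L atTop atTop) (hK : Tendsto K atTop atTop)
    (hLK : ∀ᶠ n in atTop, n + ℓ + 2 = L n + K n) {u : ∀ n, Fin (L n) → ℝ}
    (hu : ∀ᶠ n in atTop, IsTopEigenvector (HdeltaSq a ξ φ δ (L n) (K n)) (u n)) :
    Tendsto (fun n => recErr a ξ φ δ (L n) (K n) (u n) n / δ -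
      Dfun a ξ ℓ * Real.cos (ξ * n + (ξ * ℓ + φ + (limitAmplitude a ξ ℓ).arg))) atTop (𝓝 0) := by
  have combined := (tendsto_recErr_div_sub_hankelize ha hδ hL hK hLK hu).add
    (tendsto_hankelize_tangentProj_sub ha ξ φ hL hK hLK)
  rw [add_zero] at combined
  refine combined.congr fun n => ?_
  rw [sub_add_sub_cancel, re_exp_mul_exp_pow_mul, norm_limitAmplitude ha]
  push_cast
  ring_nf

lemma sum_Icc_add_one_add (ℓ N : ℕ) (f : ℕ → ℝ) :
    ∑ n ∈ Finset.Icc (ℓ + 1) (N + ℓ), f n = ∑ m ∈ Finset.range N, f (m + ℓ + 1) := by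
  simp only [add_assoc]
  rw [Finset.range_eq_Ico, Finset.sum_Ico_add' f 0 N (ℓ + 1), zero_add, ← add_assoc]
  rfl

lemma tendsto_atTop_of_tendsto_div_natCast {α : ℝ} (hα : 0 < α)
    (hlim : Tendsto (fun n : ℕ => (L n : ℝ) / n) atTop (𝓝 α)) : Tendsto L atTop atTop := by
  have product : Tendsto (fun n : ℕ => (L n : ℝ) / n * n) atTop atTop :=
    hlim.pos_mul_atTop hα tendsto_natCast_atTop_atTop
  refine tendsto_natCast_atTop_iff.1 (product.congr' ?_)
  filter_upwards [eventually_ne_atTop 0] with n hn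
  exact div_mul_cancel₀ _ (Nat.cast_ne_zero.2 hn)

end Convergence

theorem stmt_7_general {a ξ φ δ A B : ℝ} {ℓ : ℕ} {L K : ℕ → ℕ} (ha : 1 < a)
    (hξ : Irrational (ξ / (2 * Real.pi))) (hL : Tendsto L atTop atTop)
    (hK : Tendsto K atTop atTop) (hLK : ∀ᶠ n in atTop, L n + K n = n + 1) (hδ : δ ≠ 0)
    (hAB : A < B) (hA : -Dfun a ξ ℓ ≤ A) (hB : B ≤ Dfun a ξ ℓ) {u : ∀ n, Fin (L n) → ℝ}
    (hu : ∀ᶠ n in atTop, IsTopEigenvector (HdeltaSq a ξ φ δ (L n) (K n)) (u n)) :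
    Tendsto (fun N : ℕ =>
        (1 / (N : ℝ)) * ∑ n ∈ Finset.Icc (ℓ + 1) (N + ℓ),
          (Set.Ioo A B).indicator (fun _ => (1 : ℝ))
            (recErr a ξ φ δ (L n) (K n) (u n) (n - 1 - ℓ) / δ))
      atTop (𝓝 (∫ x in A..B, 1 / (Real.pi * √(Dfun a ξ ℓ ^ 2 - x ^ 2)))) := by
  have shift : Tendsto (fun m => m + ℓ + 1) atTop atTop := tendsto_add_atTop_nat (ℓ + 1)
  have errors := tendsto_recErr_div_sub_Dfun_mul_cos (ℓ := ℓ) ha hδ (hL.comp shift)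
    (hK.comp shift) ((shift.eventually hLK).mono fun m hm => hm.symm) (shift.eventually hu)
  refine (tendsto_average_indicator_Ioo_arcsine hξ hAB hA hB errors).congr fun N => ?_
  rw [sum_Icc_add_one_add, one_div]
  simp only [Function.comp_apply, show ∀ m, m + ℓ + 1 - 1 - ℓ = m by omega]

/-- for irrational frequency `ω`, the empirical distribution of the
normalized last reconstruction errors converges to the arcsine law on
`[-D(ℓ), D(ℓ)]`. -/
theorem stmt_7 (a ξ φ α : ℝ) (ha : 1 < a) (hξ : ξ ∈ Set.Ioo 0 Real.pi)
    (hφ : φ ∈ Set.Ico 0 (2 * Real.pi)) (hα : α ∈ Set.Ioo (0 : ℝ) 1)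
    (L K : ℕ → ℕ)
    (hLK : ∀ N, 3 ≤ N → 1 < L N ∧ L N ≤ K N ∧ L N + K N = N + 1)
    (hlim : Tendsto (fun N : ℕ => (L N : ℝ) / (N : ℝ)) atTop (nhds α))
    (ω : ℝ) (hω : Irrational ω) (hω12 : ω ∈ Set.Ioo (0 : ℝ) (1 / 2))
    (hξval : ξ = 2 * Real.pi * ω)
    (ℓ : ℕ) (δ : ℝ) (hδ : δ ≠ 0) (hD : Dfun a ξ ℓ > 0)
    (A B : ℝ) (hAB : A < B) (hA : -Dfun a ξ ℓ ≤ A) (hB : B ≤ Dfun a ξ ℓ)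
    (u : ∀ n : ℕ, Fin (L n) → ℝ)
    (hu : ∀ n, 3 ≤ n → IsTopEigenvector (HdeltaSq a ξ φ δ (L n) (K n)) (u n)) :
    Tendsto (fun N : ℕ =>
        (1 / (N : ℝ)) * ∑ n ∈ Finset.Icc (ℓ + 1) (N + ℓ),
          (Set.Ioo A B).indicator (fun _ => (1 : ℝ))
            (recErr a ξ φ δ (L n) (K n) (u n) (n - 1 - ℓ) / δ))
      atTop
      (nhds (∫ x in A..B, 1 / (Real.pi * Real.sqrt (Dfun a ξ ℓ ^ 2 - x ^ 2)))) := by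
  have hL : Tendsto L atTop atTop := tendsto_atTop_of_tendsto_div_natCast hα.1 hlim
  have large : ∀ᶠ N : ℕ in atTop, 3 ≤ N := eventually_ge_atTop 3
  exact stmt_7_general ha (by rwa [hξval, mul_div_cancel_left₀ ω Real.two_pi_pos.ne']) hL
    (tendsto_atTop_mono' atTop (large.mono fun N hN => (hLK N hN).2.1) hL)
    (large.mono fun N hN => (hLK N hN).2.2) hδ hAB hA hB (large.mono hu)
end

section
/- There exist δ* > 0, a constant C > 0 and an integer N₀ such that for every δ with |δ| < δ*, every N ≥ N₀, every unit eigenvector u of H(δ)H(δ)ᵀ corresponding to its largest eigenvalue, and every index 0 ≤ j < N: |r_j(N, δ)| = |(𝒮(u uᵀ H(δ)))_j − a^{jT/N}| ≤ C/N. That is, in the discretization scheme the SSA reconstruction errors satisfy r_j = O(1/N) uniformly in 0 ≤ j < N for all sufficiently small δ. -/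
open Filter Matrix

/-- The discretized exponential signal `x_n = a^{nT/N}`. -/
noncomputable def xdisc (a T : ℝ) (N : ℕ) : ℕ → ℝ := fun n => a ^ ((n : ℝ) * T / (N : ℝ))

/-- The `L × K` Hankel matrix of the discretized signal. -/
noncomputable def Hd (a T : ℝ) (N L K : ℕ) : Matrix (Fin L) (Fin K) ℝ :=
  Matrix.of fun i k => xdisc a T N ((i : ℕ) + (k : ℕ))

/-- The `L × K` Hankel matrix of the harmonic noise `e_n = cos(ξ n + φ)`. -/
noncomputable def Ed (ξ φ : ℝ) (L K : ℕ) : Matrix (Fin L) (Fin K) ℝ :=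
  Matrix.of fun i k => Real.cos (ξ * (((i : ℕ) + (k : ℕ) : ℕ) : ℝ) + φ)

/-- The vector `W_M = (1, a^{T/N}, …, a^{(M-1)T/N})ᵀ`. -/
noncomputable def Wd (a T : ℝ) (N M : ℕ) : Fin M → ℝ := fun i => a ^ (((i : ℕ) : ℝ) * T / (N : ℝ))

/-- `B(δ) = δ(HEᵀ + EHᵀ) + δ²EEᵀ`. -/
noncomputable def Bmat (a T ξ φ δ : ℝ) (N L K : ℕ) : Matrix (Fin L) (Fin L) ℝ :=
  δ • (Hd a T N L K * (Ed ξ φ L K)ᵀ + Ed ξ φ L K * (Hd a T N L K)ᵀ)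
  + δ ^ 2 • (Ed ξ φ L K * (Ed ξ φ L K)ᵀ)

/-- The spectral (ℓ²-operator) norm of a matrix. -/
noncomputable def specNorm {m n : ℕ} (A : Matrix (Fin m) (Fin n) ℝ) : ℝ :=
  ‖(Matrix.toEuclideanLin A).toContinuousLinearMap‖

/-- The max-norm of a matrix: the maximum of the absolute values of its entries. -/
noncomputable def maxNorm {m n : ℕ} (A : Matrix (Fin m) (Fin n) ℝ) : ℝ :=
  ⨆ p : Fin m × Fin n, |A p.1 p.2|

/-!
The noisy trajectory matrix is `M = w vᵀ + δ E`, where `w` and `v` are sampled exponentials.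
Geometric sums with a ratio that stays away from `1` show that `E v` and `wᵀ E` have entries `O(1)`,
whereas the Rayleigh quotient at `w` shows that the largest eigenvalue `μ` of `M Mᵀ` is of order
`N²`. Substituting the eigenvector equation into `μ uᵀ E` and absorbing the `δ²` feedback term into
`μ` gives `uᵀ E` entries of order `N^(-1/2)`. With `y = Mᵀ u`, the leading terms of
`μ (u yᵀ - w vᵀ)` cancel and what remains is `O(N)`, so every entry of the residual `u yᵀ - w vᵀ`,
and hence every antidiagonal average, is `O(1 / N)`.
-/

section DotProduct

variable {ι κ : Type*} [Fintype ι] [Fintype κ]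

lemma abs_dotProduct_le_card_mul_norm (x y : ι → ℝ) :
    |x ⬝ᵥ y| ≤ Fintype.card ι * (‖x‖ * ‖y‖) := by
  refine (Finset.abs_sum_le_sum_abs _ _).trans ?_
  rw [← nsmul_eq_mul]
  refine Finset.sum_le_card_nsmul _ _ _ fun i _ => ?_
  rw [abs_mul]
  gcongr
  · exact norm_le_pi_norm x i
  · exact norm_le_pi_norm y i

lemma abs_dotProduct_le_sqrt_card_mul_norm {u : ι → ℝ} (hu : u ⬝ᵥ u = 1) (x : ι → ℝ) :
    |u ⬝ᵥ x| ≤ √(Fintype.card ι) * ‖x‖ := by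
  refine abs_le_of_sq_le_sq ?_ (by positivity)
  have cauchy_schwarz : (u ⬝ᵥ x) ^ 2 ≤ (u ⬝ᵥ u) * (x ⬝ᵥ x) := by
    simpa only [dotProduct, ← pow_two] using Finset.sum_mul_sq_le_sq_mul_sq Finset.univ u x
  calc (u ⬝ᵥ x) ^ 2 ≤ |x ⬝ᵥ x| := by
        rw [hu, one_mul] at cauchy_schwarz
        exact cauchy_schwarz.trans (le_abs_self _)
    _ ≤ Fintype.card ι * (‖x‖ * ‖x‖) := abs_dotProduct_le_card_mul_norm x x
    _ = (√(Fintype.card ι) * ‖x‖) ^ 2 := by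
        rw [mul_pow, Real.sq_sqrt (Nat.cast_nonneg _), pow_two]

lemma norm_mulVec_le_card_mul_norm {E : Matrix ι κ ℝ} (hE : ∀ i k, |E i k| ≤ 1) (x : κ → ℝ) :
    ‖E *ᵥ x‖ ≤ Fintype.card κ * ‖x‖ := by
  refine (pi_norm_le_iff_of_nonneg (by positivity)).2 fun i => ?_
  refine (abs_dotProduct_le_card_mul_norm (E i) x).trans ?_
  gcongr
  exact mul_le_of_le_one_left (norm_nonneg _)
    ((pi_norm_le_iff_of_nonneg zero_le_one).2 (hE i))

lemma norm_vecMul_le_card_mul_norm {E : Matrix ι κ ℝ} (hE : ∀ i k, |E i k| ≤ 1) (x : ι → ℝ) :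
    ‖x ᵥ* E‖ ≤ Fintype.card ι * ‖x‖ := by
  rw [← mulVec_transpose]
  exact norm_mulVec_le_card_mul_norm (fun k i => hE i k) x

lemma norm_vecMul_le_sqrt_card {E : Matrix ι κ ℝ} (hE : ∀ i k, |E i k| ≤ 1) {u : ι → ℝ}
    (hu : u ⬝ᵥ u = 1) : ‖u ᵥ* E‖ ≤ √(Fintype.card ι) := by
  refine (pi_norm_le_iff_of_nonneg (by positivity)).2 fun k => ?_
  refine (abs_dotProduct_le_sqrt_card_mul_norm hu _).trans ?_
  exact mul_le_of_le_one_right (by positivity)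
    ((pi_norm_le_iff_of_nonneg zero_le_one).2 fun i => hE i k)

lemma dotProduct_mulVec_le_of_forall_eigenvalue_le {A : Matrix ι ι ℝ} (hA : A.IsHermitian) {μ : ℝ}
    (hμ : ∀ (ν : ℝ) (x : ι → ℝ), x ≠ 0 → A *ᵥ x = ν • x → ν ≤ μ) (x : ι → ℝ) :
    x ⬝ᵥ A *ᵥ x ≤ μ * (x ⬝ᵥ x) := by
  classical
  have hherm : (μ • (1 : Matrix ι ι ℝ) - A).IsHermitian :=
    (isHermitian_one.smul (IsSelfAdjoint.all μ)).sub hA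
  have hpos : (μ • (1 : Matrix ι ι ℝ) - A).PosSemidef := by
    refine hherm.posSemidef_iff_eigenvalues_nonneg.2 fun i => ?_
    have heig := hherm.mulVec_eigenvectorBasis i
    rw [sub_mulVec, smul_mulVec, one_mulVec, sub_eq_iff_eq_add, ← sub_eq_iff_eq_add', ← sub_smul]
      at heig
    have hne : (hherm.eigenvectorBasis i).ofLp ≠ 0 := fun h0 =>
      hherm.eigenvectorBasis.orthonormal.ne_zero i (WithLp.ofLp_injective 2 h0)
    simpa using hμ _ _ hne heig.symm
  have hnonneg := hpos.dotProduct_mulVec_nonneg x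
  rw [sub_mulVec, smul_mulVec, one_mulVec, dotProduct_sub, dotProduct_smul] at hnonneg
  simpa using hnonneg

end DotProduct

section PerturbedRankOne

variable {ι κ : Type*}

/-- The signal `w vᵀ` observed with the noise matrix `E` at level `δ`. -/
def perturbedRankOne (w : ι → ℝ) (v : κ → ℝ) (δ : ℝ) (E : Matrix ι κ ℝ) : Matrix ι κ ℝ :=
  vecMulVec w v + δ • E

variable {w : ι → ℝ} {v : κ → ℝ} {δ : ℝ} {E : Matrix ι κ ℝ}

lemma vecMul_perturbedRankOne [Fintype ι] (u : ι → ℝ) :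
    u ᵥ* perturbedRankOne w v δ E = (u ⬝ᵥ w) • v + δ • (u ᵥ* E) := by
  rw [perturbedRankOne, vecMul_add, vecMul_vecMulVec, vecMul_smul]

lemma perturbedRankOne_mulVec [Fintype κ] (y : κ → ℝ) :
    perturbedRankOne w v δ E *ᵥ y = (v ⬝ᵥ y) • w + δ • (E *ᵥ y) := by
  rw [perturbedRankOne, add_mulVec, vecMulVec_mulVec, smul_mulVec, op_smul_eq_smul]

variable [Fintype ι] [Fintype κ]

lemma mul_card_mul_card_le_of_rayleigh_le [Nonempty ι] {m μ : ℝ} (hm : 0 < m)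
    (hw : ∀ i, m ≤ w i) (hv : ∀ k, m ≤ v k) (hδ : |δ| * ‖w ᵥ* E‖ ≤ m ^ 3 / 2)
    (hμ : ∀ x : ι → ℝ, (x ᵥ* perturbedRankOne w v δ E) ⬝ᵥ (x ᵥ* perturbedRankOne w v δ E) ≤
      μ * (x ⬝ᵥ x)) :
    m ^ 4 / 4 * (Fintype.card ι * Fintype.card κ) ≤ μ := by
  have hww : m ^ 2 * Fintype.card ι ≤ w ⬝ᵥ w := by
    rw [mul_comm, ← nsmul_eq_mul]
    refine Finset.card_nsmul_le_sum _ _ _ fun i _ => ?_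
    rw [← pow_two]
    gcongr
    exact hw i
  have hcard : (1 : ℝ) ≤ Fintype.card ι := by exact_mod_cast Fintype.card_pos
  have hmww : m ^ 2 ≤ w ⬝ᵥ w := (le_mul_of_one_le_right (by positivity) hcard).trans hww
  have hww_pos : 0 < w ⬝ᵥ w := (by positivity : 0 < m ^ 2).trans_le hmww
  have hentry (k : κ) : m * (w ⬝ᵥ w) / 2 ≤ (w ᵥ* perturbedRankOne w v δ E) k := by
    have hnoise : |δ * (w ᵥ* E) k| ≤ m ^ 3 / 2 := by
      rw [abs_mul]
      exact (mul_le_mul_of_nonneg_left (norm_le_pi_norm (w ᵥ* E) k) (abs_nonneg δ)).trans hδ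
    have hsignal : (w ⬝ᵥ w) * m ≤ (w ⬝ᵥ w) * v k := by gcongr; exact hv k
    have hcube : m * m ^ 2 ≤ m * (w ⬝ᵥ w) := by gcongr
    simp only [vecMul_perturbedRankOne, Pi.add_apply, Pi.smul_apply, smul_eq_mul]
    linarith [neg_abs_le (δ * (w ᵥ* E) k)]
  have hray : Fintype.card κ * (m * (w ⬝ᵥ w) / 2) ^ 2 ≤ μ * (w ⬝ᵥ w) := by
    refine le_trans ?_ (hμ w)
    rw [← nsmul_eq_mul]
    refine Finset.card_nsmul_le_sum _ _ _ fun k _ => ?_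
    rw [← pow_two]
    gcongr
    exact hentry k
  have hcancel : m ^ 2 / 4 * Fintype.card κ * (w ⬝ᵥ w) ≤ μ :=
    le_of_mul_le_mul_right (by linarith) hww_pos
  have : m ^ 2 / 4 * Fintype.card κ * (m ^ 2 * Fintype.card ι) ≤
      m ^ 2 / 4 * Fintype.card κ * (w ⬝ᵥ w) := by gcongr
  linarith

section Eigenvector

variable {u : ι → ℝ} {μ : ℝ}

lemma eigenvalue_smul_vecMul_noise
    (heig : perturbedRankOne w v δ E *ᵥ (u ᵥ* perturbedRankOne w v δ E) = μ • u) :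
    μ • (u ᵥ* E) = (v ⬝ᵥ (u ᵥ* perturbedRankOne w v δ E)) • (w ᵥ* E) +
      δ • ((E *ᵥ (u ᵥ* perturbedRankOne w v δ E)) ᵥ* E) := by
  rw [← smul_vecMul, ← heig, perturbedRankOne_mulVec, add_vecMul, smul_vecMul, smul_vecMul]

lemma eigenvalue_eq_signal_add_noise (hu : u ⬝ᵥ u = 1)
    (heig : perturbedRankOne w v δ E *ᵥ (u ᵥ* perturbedRankOne w v δ E) = μ • u) :
    μ = (v ⬝ᵥ (u ᵥ* perturbedRankOne w v δ E)) * (u ⬝ᵥ w) +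
      δ * ((u ᵥ* E) ⬝ᵥ (u ᵥ* perturbedRankOne w v δ E)) := by
  have := congrArg (u ⬝ᵥ ·) heig
  simp only [perturbedRankOne_mulVec, dotProduct_add, dotProduct_smul, hu, smul_eq_mul, mul_one,
    dotProduct_mulVec] at this
  exact this.symm

-- The leading terms `(v ⬝ᵥ y) (u ⬝ᵥ w) w i v k` cancel, so every remaining term carries a `δ`.
lemma eigenvalue_mul_residual (hu : u ⬝ᵥ u = 1)
    (heig : perturbedRankOne w v δ E *ᵥ (u ᵥ* perturbedRankOne w v δ E) = μ • u)
    {y : κ → ℝ} (hy : u ᵥ* perturbedRankOne w v δ E = y) (i : ι) (k : κ) :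
    μ * (u i * y k - w i * v k) =
      δ * ((v ⬝ᵥ y) * (w i * (u ᵥ* E) k) + (E *ᵥ y) i * y k -
        ((u ᵥ* E) ⬝ᵥ y) * (w i * v k)) := by
  have hμ := eigenvalue_eq_signal_add_noise hu heig
  have hui := congrFun heig i
  have hyk := congrFun hy k
  rw [hy] at hμ hui
  rw [vecMul_perturbedRankOne] at hyk
  simp only [perturbedRankOne_mulVec, Pi.add_apply, Pi.smul_apply, smul_eq_mul] at hui hyk
  linear_combination (-y k) * hui - (w i * v k) * hμ - (v ⬝ᵥ y) * w i * hyk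

lemma norm_noise_mulVec_le_add (hE : ∀ i k, |E i k| ≤ 1) :
    ‖E *ᵥ (u ᵥ* perturbedRankOne w v δ E)‖ ≤
      |u ⬝ᵥ w| * ‖E *ᵥ v‖ + |δ| * (Fintype.card κ * ‖u ᵥ* E‖) := by
  rw [vecMul_perturbedRankOne, mulVec_add, mulVec_smul, mulVec_smul]
  refine (norm_add_le _ _).trans ?_
  rw [norm_smul, norm_smul, Real.norm_eq_abs, Real.norm_eq_abs]
  gcongr
  exact norm_mulVec_le_card_mul_norm hE _

lemma eigenvalue_mul_norm_vecMul_noise_le_add (hE : ∀ i k, |E i k| ≤ 1)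
    (heig : perturbedRankOne w v δ E *ᵥ (u ᵥ* perturbedRankOne w v δ E) = μ • u) :
    μ * ‖u ᵥ* E‖ ≤ |v ⬝ᵥ (u ᵥ* perturbedRankOne w v δ E)| * ‖w ᵥ* E‖ +
      |δ| * (Fintype.card ι * ‖E *ᵥ (u ᵥ* perturbedRankOne w v δ E)‖) := by
  calc μ * ‖u ᵥ* E‖ ≤ ‖μ • (u ᵥ* E)‖ := by
        rw [norm_smul]
        gcongr
        exact le_abs_self μ
    _ ≤ _ := by
        rw [eigenvalue_smul_vecMul_noise heig]
        refine (norm_add_le _ _).trans ?_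
        rw [norm_smul, norm_smul, Real.norm_eq_abs, Real.norm_eq_abs]
        gcongr
        exact norm_vecMul_le_card_mul_norm hE _

end Eigenvector

/-- Size conditions on a signal `w vᵀ` and a noise matrix `E` of dimensions at most `n`: the signal
factors are bounded by `A` and the noise entries by `1`, while the noise averages out against the
signal factors, all up to `B` (norms of vectors are sup norms). -/
structure SignalNoiseBounds (n A B : ℝ) (w : ι → ℝ) (v : κ → ℝ) (E : Matrix ι κ ℝ) : Prop where
  card_left_le : Fintype.card ι ≤ n
  card_right_le : Fintype.card κ ≤ n
  norm_left_le : ‖w‖ ≤ A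
  norm_right_le : ‖v‖ ≤ A
  abs_noise_le_one : ∀ i k, |E i k| ≤ 1
  norm_noise_mulVec_le : ‖E *ᵥ v‖ ≤ B
  norm_vecMul_noise_le : ‖w ᵥ* E‖ ≤ B

/-- The factor such that the left projection `uᵀE` of the noise onto a leading unit singular vector
has entries at most `noiseGain A B c / √n`, when the leading eigenvalue is at least `c n²`. -/
noncomputable def noiseGain (A B c : ℝ) : ℝ := 2 * A * B * (A ^ 2 + 2) / c

/-- The factor `C` in the entrywise error bound `C / n` of the leading rank-one reconstruction, when
the leading eigenvalue is at least `c n²`. -/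
noncomputable def reconstructionConst (A B c : ℝ) : ℝ :=
  (A ^ 2 + 1) * (A * B + (2 * A ^ 2 + 1) * noiseGain A B c) / c

namespace SignalNoiseBounds

variable {n A B c μ : ℝ} {u : ι → ℝ}

lemma size_nonneg (h : SignalNoiseBounds n A B w v E) : 0 ≤ n :=
  (Nat.cast_nonneg _).trans h.card_left_le

lemma signalBound_nonneg (h : SignalNoiseBounds n A B w v E) : 0 ≤ A :=
  (norm_nonneg _).trans h.norm_left_le

lemma noiseBound_nonneg (h : SignalNoiseBounds n A B w v E) : 0 ≤ B :=
  (norm_nonneg _).trans h.norm_vecMul_noise_le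

lemma abs_dotProduct_left_le (h : SignalNoiseBounds n A B w v E) (hu : u ⬝ᵥ u = 1) :
    |u ⬝ᵥ w| ≤ √n * A := by
  refine (abs_dotProduct_le_sqrt_card_mul_norm hu w).trans ?_
  gcongr
  · exact h.card_left_le
  · exact h.norm_left_le

lemma norm_vecMul_le (h : SignalNoiseBounds n A B w v E) (hu : u ⬝ᵥ u = 1) (hδ : |δ| ≤ 1) :
    ‖u ᵥ* perturbedRankOne w v δ E‖ ≤ √n * (A ^ 2 + 1) := by
  have hA := h.signalBound_nonneg
  have hnoise : ‖u ᵥ* E‖ ≤ √n :=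
    (norm_vecMul_le_sqrt_card h.abs_noise_le_one hu).trans (Real.sqrt_le_sqrt h.card_left_le)
  calc ‖u ᵥ* perturbedRankOne w v δ E‖ ≤ |u ⬝ᵥ w| * ‖v‖ + |δ| * ‖u ᵥ* E‖ := by
        rw [vecMul_perturbedRankOne, ← Real.norm_eq_abs, ← Real.norm_eq_abs, ← norm_smul,
          ← norm_smul]
        exact norm_add_le _ _
    _ ≤ √n * A * A + 1 * √n := by
        gcongr
        · exact h.abs_dotProduct_left_le hu
        · exact h.norm_right_le
    _ = √n * (A ^ 2 + 1) := by ring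

lemma abs_dotProduct_vecMul_le (h : SignalNoiseBounds n A B w v E) (hu : u ⬝ᵥ u = 1)
    (hδ : |δ| ≤ 1) :
    |v ⬝ᵥ (u ᵥ* perturbedRankOne w v δ E)| ≤ n * (A * (√n * (A ^ 2 + 1))) := by
  have hA := h.signalBound_nonneg
  have hn := h.size_nonneg
  refine (abs_dotProduct_le_card_mul_norm _ _).trans ?_
  gcongr
  · exact h.card_right_le
  · exact h.norm_right_le
  · exact h.norm_vecMul_le hu hδ

-- The feedback term `δ² n² ‖u ᵥ* E‖` is absorbed by half of the eigenvalue.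
lemma eigenvalue_mul_norm_vecMul_noise_le (h : SignalNoiseBounds n A B w v E)
    (heig : perturbedRankOne w v δ E *ᵥ (u ᵥ* perturbedRankOne w v δ E) = μ • u)
    (hδ : |δ| ≤ 1) (hδμ : 2 * (|δ| * n) ^ 2 ≤ μ) :
    μ * ‖u ᵥ* E‖ ≤ 2 * B * (|v ⬝ᵥ (u ᵥ* perturbedRankOne w v δ E)| + n * |u ⬝ᵥ w|) := by
  have hn := h.size_nonneg
  have hB := h.noiseBound_nonneg
  have hq : ‖E *ᵥ (u ᵥ* perturbedRankOne w v δ E)‖ ≤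
      |u ⬝ᵥ w| * B + |δ| * (n * ‖u ᵥ* E‖) := by
    refine (norm_noise_mulVec_le_add h.abs_noise_le_one).trans ?_
    gcongr
    · exact h.norm_noise_mulVec_le
    · exact h.card_right_le
  have hz : μ * ‖u ᵥ* E‖ ≤ |v ⬝ᵥ (u ᵥ* perturbedRankOne w v δ E)| * B +
      |δ| * (n * (|u ⬝ᵥ w| * B + |δ| * (n * ‖u ᵥ* E‖))) := by
    refine (eigenvalue_mul_norm_vecMul_noise_le_add h.abs_noise_le_one heig).trans ?_
    gcongr
    · exact h.norm_vecMul_noise_le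
    · exact h.card_left_le
  have hsignal : |δ| * (n * (|u ⬝ᵥ w| * B)) ≤ 1 * (n * (|u ⬝ᵥ w| * B)) := by gcongr
  have hfeedback := mul_le_mul_of_nonneg_right hδμ (norm_nonneg (u ᵥ* E))
  linarith

lemma mul_norm_vecMul_noise_le (h : SignalNoiseBounds n A B w v E) (hu : u ⬝ᵥ u = 1)
    (heig : perturbedRankOne w v δ E *ᵥ (u ᵥ* perturbedRankOne w v δ E) = μ • u)
    (hδ : |δ| ≤ 1) (hδc : 2 * |δ| ^ 2 ≤ c) (hc : 0 < c) (hn : 0 < n) (hμ : c * n ^ 2 ≤ μ) :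
    n * ‖u ᵥ* E‖ ≤ noiseGain A B c * √n := by
  have hB := h.noiseBound_nonneg
  have hδμ : 2 * (|δ| * n) ^ 2 ≤ μ := by
    refine le_trans ?_ hμ
    rw [mul_pow, ← mul_assoc]
    gcongr
  have hcn : (c * n) * (n * ‖u ᵥ* E‖) ≤ (c * n) * (noiseGain A B c * √n) :=
    calc (c * n) * (n * ‖u ᵥ* E‖) = c * n ^ 2 * ‖u ᵥ* E‖ := by ring
      _ ≤ μ * ‖u ᵥ* E‖ := by gcongr
      _ ≤ 2 * B * (|v ⬝ᵥ (u ᵥ* perturbedRankOne w v δ E)| + n * |u ⬝ᵥ w|) :=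
          h.eigenvalue_mul_norm_vecMul_noise_le heig hδ hδμ
      _ ≤ 2 * B * (n * (A * (√n * (A ^ 2 + 1))) + n * (√n * A)) := by
          gcongr
          · exact h.abs_dotProduct_vecMul_le hu hδ
          · exact h.abs_dotProduct_left_le hu
      _ = (c * n) * (noiseGain A B c * √n) := by
          rw [noiseGain]
          field_simp
          ring
  exact le_of_mul_le_mul_left hcn (by positivity)

lemma norm_noise_mulVec_vecMul_le (h : SignalNoiseBounds n A B w v E) (hu : u ⬝ᵥ u = 1)
    (heig : perturbedRankOne w v δ E *ᵥ (u ᵥ* perturbedRankOne w v δ E) = μ • u)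
    (hδ : |δ| ≤ 1) (hδc : 2 * |δ| ^ 2 ≤ c) (hc : 0 < c) (hn : 0 < n) (hμ : c * n ^ 2 ≤ μ) :
    ‖E *ᵥ (u ᵥ* perturbedRankOne w v δ E)‖ ≤ (A * B + noiseGain A B c) * √n := by
  have hA := h.signalBound_nonneg
  calc ‖E *ᵥ (u ᵥ* perturbedRankOne w v δ E)‖
      ≤ |u ⬝ᵥ w| * ‖E *ᵥ v‖ + |δ| * (Fintype.card κ * ‖u ᵥ* E‖) :=
        norm_noise_mulVec_le_add h.abs_noise_le_one
    _ ≤ √n * A * B + 1 * (n * ‖u ᵥ* E‖) := by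
        gcongr
        · exact h.abs_dotProduct_left_le hu
        · exact h.norm_noise_mulVec_le
        · exact h.card_right_le
    _ ≤ (A * B + noiseGain A B c) * √n := by
        linarith [h.mul_norm_vecMul_noise_le hu heig hδ hδc hc hn hμ]

lemma abs_right_coeff_mul_noise_le (h : SignalNoiseBounds n A B w v E) (hu : u ⬝ᵥ u = 1)
    (hδ : |δ| ≤ 1) {g : ℝ} (hz : n * ‖u ᵥ* E‖ ≤ g * √n) (i : ι) (k : κ) :
    |(v ⬝ᵥ (u ᵥ* perturbedRankOne w v δ E)) * (w i * (u ᵥ* E) k)| ≤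
      A ^ 2 * (A ^ 2 + 1) * g * n := by
  have hA := h.signalBound_nonneg
  have hn := h.size_nonneg
  calc |(v ⬝ᵥ (u ᵥ* perturbedRankOne w v δ E)) * (w i * (u ᵥ* E) k)|
      ≤ n * (A * (√n * (A ^ 2 + 1))) * (A * ‖u ᵥ* E‖) := by
        rw [abs_mul, abs_mul]
        gcongr
        · exact h.abs_dotProduct_vecMul_le hu hδ
        · exact (norm_le_pi_norm w i).trans h.norm_left_le
        · exact norm_le_pi_norm (u ᵥ* E) k
    _ = A ^ 2 * (A ^ 2 + 1) * √n * (n * ‖u ᵥ* E‖) := by ring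
    _ ≤ A ^ 2 * (A ^ 2 + 1) * √n * (g * √n) := mul_le_mul_of_nonneg_left hz (by positivity)
    _ = A ^ 2 * (A ^ 2 + 1) * g * (√n * √n) := by ring
    _ = A ^ 2 * (A ^ 2 + 1) * g * n := by rw [Real.mul_self_sqrt hn]

lemma abs_noise_mulVec_mul_vecMul_le (h : SignalNoiseBounds n A B w v E) (hu : u ⬝ᵥ u = 1)
    (hδ : |δ| ≤ 1) {q : ℝ} (hq : ‖E *ᵥ (u ᵥ* perturbedRankOne w v δ E)‖ ≤ q * √n)
    (i : ι) (k : κ) :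
    |(E *ᵥ (u ᵥ* perturbedRankOne w v δ E)) i * (u ᵥ* perturbedRankOne w v δ E) k| ≤
      q * (A ^ 2 + 1) * n := by
  calc |(E *ᵥ (u ᵥ* perturbedRankOne w v δ E)) i * (u ᵥ* perturbedRankOne w v δ E) k|
      ≤ q * √n * (√n * (A ^ 2 + 1)) := by
        rw [abs_mul]
        exact mul_le_mul ((norm_le_pi_norm _ i).trans hq)
          ((norm_le_pi_norm _ k).trans (h.norm_vecMul_le hu hδ)) (abs_nonneg _)
          ((norm_nonneg _).trans hq)
    _ = q * (A ^ 2 + 1) * (√n * √n) := by ring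
    _ = q * (A ^ 2 + 1) * n := by rw [Real.mul_self_sqrt h.size_nonneg]

lemma abs_noise_dotProduct_mul_signal_le (h : SignalNoiseBounds n A B w v E) (hu : u ⬝ᵥ u = 1)
    (hδ : |δ| ≤ 1) {g : ℝ} (hz : n * ‖u ᵥ* E‖ ≤ g * √n) (i : ι) (k : κ) :
    |((u ᵥ* E) ⬝ᵥ (u ᵥ* perturbedRankOne w v δ E)) * (w i * v k)| ≤
      A ^ 2 * (A ^ 2 + 1) * g * n := by
  have hA := h.signalBound_nonneg
  have hn := h.size_nonneg
  have hdot : |(u ᵥ* E) ⬝ᵥ (u ᵥ* perturbedRankOne w v δ E)| ≤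
      n * (‖u ᵥ* E‖ * (√n * (A ^ 2 + 1))) := by
    refine (abs_dotProduct_le_card_mul_norm _ _).trans ?_
    gcongr
    · exact h.card_right_le
    · exact h.norm_vecMul_le hu hδ
  calc |((u ᵥ* E) ⬝ᵥ (u ᵥ* perturbedRankOne w v δ E)) * (w i * v k)|
      ≤ n * (‖u ᵥ* E‖ * (√n * (A ^ 2 + 1))) * (A * A) := by
        rw [abs_mul, abs_mul]
        gcongr
        · exact (norm_le_pi_norm w i).trans h.norm_left_le
        · exact (norm_le_pi_norm v k).trans h.norm_right_le
    _ = A ^ 2 * (A ^ 2 + 1) * √n * (n * ‖u ᵥ* E‖) := by ring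
    _ ≤ A ^ 2 * (A ^ 2 + 1) * √n * (g * √n) := mul_le_mul_of_nonneg_left hz (by positivity)
    _ = A ^ 2 * (A ^ 2 + 1) * g * (√n * √n) := by ring
    _ = A ^ 2 * (A ^ 2 + 1) * g * n := by rw [Real.mul_self_sqrt hn]

lemma abs_eigenvalue_mul_residual_le (h : SignalNoiseBounds n A B w v E) (hu : u ⬝ᵥ u = 1)
    (heig : perturbedRankOne w v δ E *ᵥ (u ᵥ* perturbedRankOne w v δ E) = μ • u)
    (hδ : |δ| ≤ 1) (hδc : 2 * |δ| ^ 2 ≤ c) (hc : 0 < c) (hn : 0 < n) (hμ : c * n ^ 2 ≤ μ)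
    (i : ι) (k : κ) :
    |μ * (u i * (u ᵥ* perturbedRankOne w v δ E) k - w i * v k)| ≤
      c * reconstructionConst A B c * n := by
  have hz := h.mul_norm_vecMul_noise_le hu heig hδ hδc hc hn hμ
  have hq := h.norm_noise_mulVec_vecMul_le hu heig hδ hδc hc hn hμ
  have hconst : c * reconstructionConst A B c =
      (A ^ 2 + 1) * (A * B + (2 * A ^ 2 + 1) * noiseGain A B c) := by
    rw [reconstructionConst, mul_div_cancel₀ _ hc.ne']
  rw [eigenvalue_mul_residual hu heig rfl, abs_mul, hconst]
  refine (mul_le_of_le_one_left (abs_nonneg _) hδ).trans ?_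
  refine (abs_sub _ _).trans ((add_le_add (abs_add_le _ _) le_rfl).trans ?_)
  linarith [h.abs_right_coeff_mul_noise_le hu hδ hz i k,
    h.abs_noise_mulVec_mul_vecMul_le hu hδ hq i k,
    h.abs_noise_dotProduct_mul_signal_le hu hδ hz i k]

lemma abs_residual_le (h : SignalNoiseBounds n A B w v E) (hu : u ⬝ᵥ u = 1)
    (heig : perturbedRankOne w v δ E *ᵥ (u ᵥ* perturbedRankOne w v δ E) = μ • u)
    (hδ : |δ| ≤ 1) (hδc : 2 * |δ| ^ 2 ≤ c) (hc : 0 < c) (hn : 0 < n) (hμ : c * n ^ 2 ≤ μ)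
    (i : ι) (k : κ) :
    |u i * (u ᵥ* perturbedRankOne w v δ E) k - w i * v k| ≤ reconstructionConst A B c / n := by
  have hμ0 : 0 < μ := (by positivity : 0 < c * n ^ 2).trans_le hμ
  have hscaled := h.abs_eigenvalue_mul_residual_le hu heig hδ hδc hc hn hμ i k
  rw [abs_mul, abs_of_pos hμ0] at hscaled
  rw [le_div_iff₀ hn]
  refine le_of_mul_le_mul_left ?_ (by positivity : 0 < c * n)
  calc _ = c * n ^ 2 * |u i * (u ᵥ* perturbedRankOne w v δ E) k - w i * v k| := by ring
    _ ≤ μ * |u i * (u ᵥ* perturbedRankOne w v δ E) k - w i * v k| := by gcongr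
    _ ≤ c * n * reconstructionConst A B c := by linarith

end SignalNoiseBounds

end PerturbedRankOne

section GeometricSum

lemma abs_sin_le_norm_ofReal_mul_exp_sub_one (ρ ξ : ℝ) :
    |Real.sin ξ| ≤ ‖(ρ : ℂ) * Complex.exp (ξ * Complex.I) - 1‖ := by
  have hrotate : (ρ : ℂ) * Complex.exp (ξ * Complex.I) - 1 =
      Complex.exp (ξ * Complex.I) * (ρ - Complex.exp ((-ξ : ℝ) * Complex.I)) := by
    rw [mul_sub, ← Complex.exp_add]
    simp [mul_comm]
  rw [hrotate, norm_mul, Complex.norm_exp_ofReal_mul_I, one_mul]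
  refine le_trans (le_of_eq ?_) (Complex.abs_im_le_norm _)
  rw [Complex.sub_im, Complex.ofReal_im, Complex.exp_ofReal_mul_I_im, Real.sin_neg, zero_sub,
    neg_neg]

lemma sum_pow_mul_cos_eq_re (ρ ξ ψ : ℝ) (M : ℕ) :
    ∑ n ∈ Finset.range M, ρ ^ n * Real.cos (ξ * n + ψ) =
      (Complex.exp (ψ * Complex.I) *
        ∑ n ∈ Finset.range M, ((ρ : ℂ) * Complex.exp (ξ * Complex.I)) ^ n).re := by
  rw [Finset.mul_sum, Complex.re_sum]
  refine Finset.sum_congr rfl fun n _ => ?_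
  have hterm : Complex.exp (ψ * Complex.I) * ((ρ : ℂ) * Complex.exp (ξ * Complex.I)) ^ n =
      ((ρ ^ n : ℝ) : ℂ) * Complex.exp ((ξ * n + ψ : ℝ) * Complex.I) := by
    rw [mul_pow, ← Complex.exp_nat_mul, mul_left_comm, ← Complex.exp_add]
    push_cast
    ring_nf
  rw [hterm, Complex.re_ofReal_mul, Complex.exp_ofReal_mul_I_re]

lemma abs_sum_pow_mul_cos_mul_abs_sin_le (ρ ξ ψ : ℝ) (M : ℕ) :
    |∑ n ∈ Finset.range M, ρ ^ n * Real.cos (ξ * n + ψ)| * |Real.sin ξ| ≤ |ρ| ^ M + 1 := by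
  set z : ℂ := ρ * Complex.exp (ξ * Complex.I) with hz
  have hnorm : ‖z‖ = |ρ| := by
    rw [hz, norm_mul, Complex.norm_exp_ofReal_mul_I, Complex.norm_real, mul_one, Real.norm_eq_abs]
  have hre : |∑ n ∈ Finset.range M, ρ ^ n * Real.cos (ξ * n + ψ)| ≤
      ‖∑ n ∈ Finset.range M, z ^ n‖ := by
    rw [sum_pow_mul_cos_eq_re]
    refine (Complex.abs_re_le_norm _).trans_eq ?_
    rw [norm_mul, Complex.norm_exp_ofReal_mul_I, one_mul]
  calc |∑ n ∈ Finset.range M, ρ ^ n * Real.cos (ξ * n + ψ)| * |Real.sin ξ|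
      ≤ ‖∑ n ∈ Finset.range M, z ^ n‖ * ‖z - 1‖ := by
        gcongr
        exact abs_sin_le_norm_ofReal_mul_exp_sub_one ρ ξ
    _ = ‖z ^ M - 1‖ := by rw [← norm_mul, geom_sum_mul]
    _ ≤ |ρ| ^ M + 1 := by
        refine (norm_sub_le _ _).trans_eq ?_
        rw [norm_pow, hnorm, norm_one]

end GeometricSum

section Hankelization

variable {L K : ℕ}

lemma exists_fin_add_eq {j : ℕ} (hL : 0 < L) (hK : 0 < K) (hj : j + 1 < L + K) :
    ∃ (i : Fin L) (k : Fin K), (i : ℕ) + (k : ℕ) = j :=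
  ⟨⟨min j (L - 1), by omega⟩, ⟨j - min j (L - 1), by omega⟩, by simp⟩

lemma abs_hankelize_sub_le {Y : Matrix (Fin L) (Fin K) ℝ} {j : ℕ} (hL : 0 < L) (hK : 0 < K)
    (hj : j + 1 < L + K) {x b : ℝ}
    (h : ∀ (i : Fin L) (k : Fin K), (i : ℕ) + (k : ℕ) = j → |Y i k - x| ≤ b) :
    |hankelize Y j - x| ≤ b := by
  unfold hankelize
  set S := ∑ i : Fin L, ∑ k : Fin K, if (i : ℕ) + (k : ℕ) = j then (1 : ℝ) else 0 with hS
  have hpos : 0 < S := by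
    obtain ⟨i, k, hik⟩ := exists_fin_add_eq hL hK hj
    refine Finset.sum_pos' (fun i _ => Finset.sum_nonneg fun k _ => by split_ifs <;> norm_num)
      ⟨i, Finset.mem_univ _, ?_⟩
    exact Finset.sum_pos' (fun k _ => by split_ifs <;> norm_num)
      ⟨k, Finset.mem_univ _, by simp [hik]⟩
  rw [div_sub' hpos.ne', abs_div, abs_of_pos hpos, div_le_iff₀ hpos, hS, Finset.sum_mul,
    ← Finset.sum_sub_distrib, Finset.mul_sum]
  refine (Finset.abs_sum_le_sum_abs _ _).trans (Finset.sum_le_sum fun i _ => ?_)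
  rw [Finset.sum_mul, ← Finset.sum_sub_distrib, Finset.mul_sum]
  refine (Finset.abs_sum_le_sum_abs _ _).trans (Finset.sum_le_sum fun k _ => ?_)
  split_ifs with hik
  · simpa using h i k hik
  · simp

end Hankelization

section Model

lemma IsTopEigenvector.exists_eigenvalue {L K : ℕ} {M : Matrix (Fin L) (Fin K) ℝ} {u : Fin L → ℝ}
    (hu : IsTopEigenvector (M * Mᵀ) u) :
    u ⬝ᵥ u = 1 ∧ ∃ μ : ℝ, M *ᵥ (u ᵥ* M) = μ • u ∧
      ∀ x : Fin L → ℝ, (x ᵥ* M) ⬝ᵥ (x ᵥ* M) ≤ μ * (x ⬝ᵥ x) := by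
  obtain ⟨hunit, μ, heig, htop⟩ := hu
  refine ⟨?_, μ, ?_, fun x => ?_⟩
  · simpa only [normSq, dotProduct, ← pow_two] using hunit
  · rw [← heig, ← mulVec_mulVec, mulVec_transpose]
  · have hherm : (M * Mᵀ).IsHermitian := by
      simpa only [conjTranspose_eq_transpose_of_trivial] using isHermitian_mul_conjTranspose_self M
    have hray := dotProduct_mulVec_le_of_forall_eigenvalue_le hherm htop x
    rwa [← mulVec_mulVec, mulVec_transpose, dotProduct_mulVec] at hray

/-- An upper bound for the signal values `a ^ (n T / N)`, `0 ≤ n ≤ N`. -/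
noncomputable def signalMax (a T : ℝ) : ℝ := max 1 (a ^ T)

/-- A lower bound for the signal values `a ^ (n T / N)`, `0 ≤ n ≤ N`. -/
noncomputable def signalMin (a T : ℝ) : ℝ := min 1 (a ^ T)

/-- A bound, uniform in `N`, for the sums of the signal values against the harmonic noise of
frequency `ξ`. -/
noncomputable def correlationBound (a T ξ : ℝ) : ℝ := (signalMax a T + 1) / |Real.sin ξ|

variable {a T ξ φ : ℝ} {N L K : ℕ}

lemma signalMin_pos (ha : 0 < a) : 0 < signalMin a T :=
  lt_min one_pos (Real.rpow_pos_of_pos ha T)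

lemma signalMax_pos : 0 < signalMax a T :=
  one_pos.trans_le (le_max_left _ _)

lemma correlationBound_pos (hξ : Real.sin ξ ≠ 0) : 0 < correlationBound a T ξ :=
  div_pos (add_pos signalMax_pos one_pos) (abs_pos.2 hξ)

lemma rpow_mem_Icc_min_max {b θ : ℝ} (hb : 0 < b) (hθ : θ ∈ Set.Icc (0 : ℝ) 1) :
    b ^ θ ∈ Set.Icc (min 1 b) (max 1 b) := by
  rcases le_total 1 b with h1b | hb1
  · rw [min_eq_left h1b, max_eq_right h1b]
    exact ⟨Real.one_le_rpow h1b hθ.1, Real.rpow_le_self_of_one_le h1b hθ.2⟩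
  · rw [min_eq_right hb1, max_eq_left hb1]
    exact ⟨Real.self_le_rpow_of_le_one hb.le hb1 hθ.2, Real.rpow_le_one hb.le hb1 hθ.1⟩

lemma xdisc_mem_Icc (ha : 0 < a) {n : ℕ} (hn : n ≤ N) :
    xdisc a T N n ∈ Set.Icc (signalMin a T) (signalMax a T) := by
  have hθ : (n : ℝ) / N ∈ Set.Icc (0 : ℝ) 1 :=
    ⟨by positivity, div_le_one_of_le₀ (by exact_mod_cast hn) (Nat.cast_nonneg _)⟩
  have hrpow : xdisc a T N n = (a ^ T) ^ ((n : ℝ) / N) := by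
    rw [xdisc, ← Real.rpow_mul ha.le]
    ring_nf
  rw [hrpow]
  exact rpow_mem_Icc_min_max (Real.rpow_pos_of_pos ha T) hθ

lemma xdisc_eq_pow (ha : 0 ≤ a) (n : ℕ) : xdisc a T N n = (a ^ (T / N)) ^ n := by
  rw [xdisc, ← Real.rpow_mul_natCast ha]
  ring_nf

lemma xdisc_add (ha : 0 ≤ a) (m n : ℕ) :
    xdisc a T N (m + n) = xdisc a T N m * xdisc a T N n := by
  simp only [xdisc_eq_pow ha, pow_add]

lemma Hd_eq_vecMulVec (ha : 0 ≤ a) :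
    Hd a T N L K = vecMulVec (Wd a T N L) (Wd a T N K) := by
  ext i k
  exact xdisc_add ha i k

lemma transpose_Ed : (Ed ξ φ L K)ᵀ = Ed ξ φ K L := by
  ext i k
  simp only [Ed, transpose_apply, of_apply, add_comm (k : ℕ)]

lemma norm_Wd_le (ha : 0 < a) (hL : L ≤ N) : ‖Wd a T N L‖ ≤ signalMax a T := by
  refine (pi_norm_le_iff_of_nonneg signalMax_pos.le).2 fun i => ?_
  obtain ⟨hmin, hmax⟩ := xdisc_mem_Icc (T := T) ha (i.isLt.le.trans hL)
  rwa [← abs_of_pos ((signalMin_pos ha).trans_le hmin)] at hmax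

lemma norm_Ed_mulVec_Wd_le (ha : 0 < a) (hξ : Real.sin ξ ≠ 0) (hK : K ≤ N) :
    ‖Ed ξ φ L K *ᵥ Wd a T N K‖ ≤ correlationBound a T ξ := by
  refine (pi_norm_le_iff_of_nonneg (correlationBound_pos hξ).le).2 fun i => ?_
  set ρ := a ^ (T / N)
  have hentry : (Ed ξ φ L K *ᵥ Wd a T N K) i =
      ∑ n ∈ Finset.range K, ρ ^ n * Real.cos (ξ * n + (ξ * i + φ)) := by
    simp only [mulVec, dotProduct, Finset.sum_range]
    refine Finset.sum_congr rfl fun k _ => ?_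
    rw [← xdisc_eq_pow ha.le, mul_comm]
    simp only [Ed, of_apply, Wd, xdisc]
    push_cast
    ring_nf
  have hρK : |ρ| ^ K ≤ signalMax a T := by
    rw [abs_of_pos (Real.rpow_pos_of_pos ha _), ← xdisc_eq_pow ha.le]
    exact (xdisc_mem_Icc ha hK).2
  rw [Real.norm_eq_abs, hentry, correlationBound, le_div_iff₀ (abs_pos.2 hξ)]
  linarith [abs_sum_pow_mul_cos_mul_abs_sin_le ρ ξ (ξ * i + φ) K]

lemma signalNoiseBounds_Wd_Ed (ha : 0 < a) (hξ : Real.sin ξ ≠ 0) (hL : L ≤ N) (hK : K ≤ N) :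
    SignalNoiseBounds N (signalMax a T) (correlationBound a T ξ) (Wd a T N L) (Wd a T N K)
      (Ed ξ φ L K) where
  card_left_le := by simpa using hL
  card_right_le := by simpa using hK
  norm_left_le := norm_Wd_le ha hL
  norm_right_le := norm_Wd_le ha hK
  abs_noise_le_one _ _ := Real.abs_cos_le_one _
  norm_noise_mulVec_le := norm_Ed_mulVec_Wd_le ha hξ hK
  norm_vecMul_noise_le := by
    rw [← mulVec_transpose, transpose_Ed]
    exact norm_Ed_mulVec_Wd_le ha hξ hL

/-- The factor `c` in the lower bound `c N²` of the leading eigenvalue, for trajectory matrices with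
at least `γ N²` entries. -/
noncomputable def eigenvalueConst (a T γ : ℝ) : ℝ := signalMin a T ^ 4 / 4 * γ

/-- A noise level up to which the reconstruction error is `O(1 / N)`. -/
noncomputable def noiseThreshold (a T ξ γ : ℝ) : ℝ :=
  min 1 (min (eigenvalueConst a T γ / 2) (signalMin a T ^ 3 / (2 * correlationBound a T ξ)))

lemma eigenvalueConst_pos {γ : ℝ} (ha : 0 < a) (hγ : 0 < γ) : 0 < eigenvalueConst a T γ := by
  have := signalMin_pos (T := T) ha
  unfold eigenvalueConst
  positivity

lemma noiseThreshold_pos {γ : ℝ} (ha : 0 < a) (hξ : Real.sin ξ ≠ 0) (hγ : 0 < γ) :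
    0 < noiseThreshold a T ξ γ := by
  have := signalMin_pos (T := T) ha
  have := correlationBound_pos (a := a) (T := T) hξ
  have := eigenvalueConst_pos (T := T) ha hγ
  unfold noiseThreshold
  positivity

lemma reconstructionConst_pos {A B c : ℝ} (hA : 0 < A) (hB : 0 < B) (hc : 0 < c) :
    0 < reconstructionConst A B c := by
  unfold reconstructionConst noiseGain
  positivity

lemma eigenvalueConst_mul_sq_le {δ γ μ : ℝ} (ha : 0 < a) (hξ : Real.sin ξ ≠ 0) (hL : 0 < L)
    (hLN : L ≤ N) (hγ : γ * N ^ 2 ≤ L * K) (hKN : K ≤ N)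
    (hδ : |δ| ≤ signalMin a T ^ 3 / (2 * correlationBound a T ξ))
    (hμ : ∀ x : Fin L → ℝ,
      (x ᵥ* perturbedRankOne (Wd a T N L) (Wd a T N K) δ (Ed ξ φ L K)) ⬝ᵥ
        (x ᵥ* perturbedRankOne (Wd a T N L) (Wd a T N K) δ (Ed ξ φ L K)) ≤ μ * (x ⬝ᵥ x)) :
    eigenvalueConst a T γ * N ^ 2 ≤ μ := by
  have : Nonempty (Fin L) := ⟨⟨0, hL⟩⟩
  have hB := correlationBound_pos (a := a) (T := T) hξ
  have hδB : |δ| * ‖Wd a T N L ᵥ* Ed ξ φ L K‖ ≤ signalMin a T ^ 3 / 2 := by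
    rw [le_div_iff₀ (by positivity)] at hδ
    have := mul_le_mul_of_nonneg_left
      (signalNoiseBounds_Wd_Ed (T := T) (φ := φ) ha hξ hLN hKN).norm_vecMul_noise_le (abs_nonneg δ)
    linarith
  have hlower := mul_card_mul_card_le_of_rayleigh_le (signalMin_pos ha)
    (fun i => (xdisc_mem_Icc ha (i.isLt.le.trans hLN)).1)
    (fun k => (xdisc_mem_Icc ha (k.isLt.le.trans hKN)).1) hδB hμ
  rw [Fintype.card_fin, Fintype.card_fin] at hlower
  refine le_trans ?_ hlower
  rw [eigenvalueConst, mul_assoc]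
  gcongr

lemma abs_reconstruction_sub_xdisc_le {δ γ : ℝ} {u : Fin L → ℝ} {j : ℕ} (ha : 0 < a)
    (hξ : Real.sin ξ ≠ 0) (hγ0 : 0 < γ) (hL : 0 < L) (hK : 0 < K) (hLK : L + K = N + 1)
    (hγ : γ * N ^ 2 ≤ L * K) (hδ : |δ| ≤ noiseThreshold a T ξ γ)
    (hu : IsTopEigenvector
      ((Hd a T N L K + δ • Ed ξ φ L K) * (Hd a T N L K + δ • Ed ξ φ L K)ᵀ) u) (hj : j < N) :
    |hankelize (vecMulVec u u * (Hd a T N L K + δ • Ed ξ φ L K)) j - xdisc a T N j| ≤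
      reconstructionConst (signalMax a T) (correlationBound a T ξ) (eigenvalueConst a T γ) / N := by
  obtain ⟨hδ1, hδc, hδm⟩ : |δ| ≤ 1 ∧ |δ| ≤ eigenvalueConst a T γ / 2 ∧
      |δ| ≤ signalMin a T ^ 3 / (2 * correlationBound a T ξ) := by
    simpa only [noiseThreshold, le_min_iff] using hδ
  have hδsq : 2 * |δ| ^ 2 ≤ eigenvalueConst a T γ := by
    linarith [pow_le_of_le_one (abs_nonneg δ) hδ1 two_ne_zero]
  have hLN : L ≤ N := by omega
  have hKN : K ≤ N := by omega
  have hN : (0 : ℝ) < N := by exact_mod_cast (Nat.zero_le j).trans_lt hj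
  have hM : Hd a T N L K + δ • Ed ξ φ L K =
      perturbedRankOne (Wd a T N L) (Wd a T N K) δ (Ed ξ φ L K) := by
    rw [Hd_eq_vecMulVec ha.le, perturbedRankOne]
  rw [hM] at hu ⊢
  obtain ⟨hunit, μ, heig, hray⟩ := hu.exists_eigenvalue
  have hμ := eigenvalueConst_mul_sq_le ha hξ hL hLN hγ hKN hδm hray
  refine abs_hankelize_sub_le hL hK (by omega) fun i k hik => ?_
  rw [← hik, xdisc_add ha.le, vecMulVec_mul]
  exact (signalNoiseBounds_Wd_Ed ha hξ hLN hKN).abs_residual_le hunit heig hδ1 hδsq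
    (eigenvalueConst_pos ha hγ0) hN hμ i k

end Model

lemma tendsto_mul_div_sq {α : ℝ} {L K : ℕ → ℕ} (hLK : ∀ᶠ N in atTop, L N + K N = N + 1)
    (hlim : Tendsto (fun N : ℕ => (L N : ℝ) / N) atTop (nhds α)) :
    Tendsto (fun N : ℕ => (L N : ℝ) * K N / (N : ℝ) ^ 2) atTop (nhds (α * (1 - α))) := by
  have hK : Tendsto (fun N : ℕ => (K N : ℝ) / N) atTop (nhds (1 - α)) := by
    have hlimK : Tendsto (fun N : ℕ => 1 + 1 / (N : ℝ) - (L N : ℝ) / N) atTop (nhds (1 - α)) := by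
      simpa using (tendsto_one_div_atTop_nhds_zero_nat.const_add 1).sub hlim
    refine hlimK.congr' ?_
    filter_upwards [hLK, eventually_gt_atTop 0] with N hN hN0
    have hsum : (L N : ℝ) + K N = N + 1 := by exact_mod_cast hN
    field_simp
    linarith
  refine (hlim.mul hK).congr fun N => ?_
  rw [div_mul_div_comm, pow_two]

lemma eventually_mul_sq_le_mul {α : ℝ} (hα : α ∈ Set.Ioo (0 : ℝ) 1) {L K : ℕ → ℕ}
    (hLK : ∀ᶠ N in atTop, L N + K N = N + 1)
    (hlim : Tendsto (fun N : ℕ => (L N : ℝ) / N) atTop (nhds α)) :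
    ∀ᶠ N : ℕ in atTop, α * (1 - α) / 2 * (N : ℝ) ^ 2 ≤ L N * K N := by
  have hpos : 0 < α * (1 - α) := mul_pos hα.1 (sub_pos.2 hα.2)
  filter_upwards [(tendsto_mul_div_sq hLK hlim).eventually_const_lt (half_lt_self hpos),
    eventually_gt_atTop 0] with N hN hN0
  exact ((lt_div_iff₀ (by positivity)).1 hN).le

theorem stmt_19_general {a ξ α : ℝ} (T φ : ℝ) (ha : 0 < a) (hξ : Real.sin ξ ≠ 0)
    (hα : α ∈ Set.Ioo (0 : ℝ) 1) {L K : ℕ → ℕ} (hLK : ∀ᶠ N in atTop, L N + K N = N + 1)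
    (hlim : Tendsto (fun N : ℕ => (L N : ℝ) / (N : ℝ)) atTop (nhds α)) :
    ∃ δstar > (0 : ℝ), ∃ C > (0 : ℝ), ∃ N₀ : ℕ, ∀ δ : ℝ, |δ| < δstar → ∀ N, N₀ ≤ N →
      ∀ u : Fin (L N) → ℝ,
        IsTopEigenvector
          ((Hd a T N (L N) (K N) + δ • Ed ξ φ (L N) (K N)) *
            (Hd a T N (L N) (K N) + δ • Ed ξ φ (L N) (K N))ᵀ) u →
        ∀ j, j < N →
          |hankelize (Matrix.vecMulVec u u *
              (Hd a T N (L N) (K N) + δ • Ed ξ φ (L N) (K N))) j -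
            xdisc a T N j| ≤ C / (N : ℝ) := by
  set γ := α * (1 - α) / 2
  have hγ : 0 < γ := half_pos (mul_pos hα.1 (sub_pos.2 hα.2))
  obtain ⟨N₀, hN₀⟩ := eventually_atTop.1 ((eventually_mul_sq_le_mul hα hLK hlim).and
    (hLK.and (eventually_gt_atTop 0)))
  refine ⟨noiseThreshold a T ξ γ, noiseThreshold_pos ha hξ hγ,
    reconstructionConst (signalMax a T) (correlationBound a T ξ) (eigenvalueConst a T γ),
    reconstructionConst_pos signalMax_pos (correlationBound_pos hξ) (eigenvalueConst_pos ha hγ),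
    N₀, fun δ hδ N hN u hu j hj => ?_⟩
  obtain ⟨hentries, hsum, hNpos⟩ := hN₀ N hN
  have hmul : 0 < L N * K N := by
    have : (0 : ℝ) < L N * K N := lt_of_lt_of_le (by positivity) hentries
    exact_mod_cast this
  exact abs_reconstruction_sub_xdisc_le ha hξ hγ (Nat.pos_of_mul_pos_right hmul)
    (Nat.pos_of_mul_pos_left hmul) hsum hentries hδ.le hu hj

/-- in the discretization scheme, the SSA reconstruction errors
satisfy `|r_j(N, δ)| ≤ C/N` uniformly in `0 ≤ j < N` for all sufficiently
small `δ`. -/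
theorem stmt_19 (a T ξ φ α : ℝ) (ha : 1 < a) (hT : 0 < T)
    (hξ : ξ ∈ Set.Ioo 0 Real.pi) (hφ : φ ∈ Set.Ico 0 (2 * Real.pi))
    (hα : α ∈ Set.Ioo (0 : ℝ) 1)
    (L K : ℕ → ℕ)
    (hLK : ∀ N, 3 ≤ N → 1 < L N ∧ 1 < K N ∧ L N + K N = N + 1)
    (hlim : Tendsto (fun N : ℕ => (L N : ℝ) / (N : ℝ)) atTop (nhds α)) :
    ∃ δstar > (0 : ℝ), ∃ C > (0 : ℝ), ∃ N₀ : ℕ, ∀ δ : ℝ, |δ| < δstar → ∀ N, N₀ ≤ N →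
      ∀ u : Fin (L N) → ℝ,
        IsTopEigenvector
          ((Hd a T N (L N) (K N) + δ • Ed ξ φ (L N) (K N)) *
            (Hd a T N (L N) (K N) + δ • Ed ξ φ (L N) (K N))ᵀ) u →
        ∀ j, j < N →
          |hankelize (Matrix.vecMulVec u u *
              (Hd a T N (L N) (K N) + δ • Ed ξ φ (L N) (K N))) j -
            xdisc a T N j| ≤ C / (N : ℝ) :=
  stmt_19_general T φ (one_pos.trans ha) (Real.sin_pos_of_mem_Ioo hξ).ne' hα
    (eventually_atTop.2 ⟨3, fun N hN => (hLK N hN).2.2⟩) hlim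
end
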